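/- For every integer n ≥ 2, let B = {a^ε m^δ c^d : ε, δ ∈ {0,1}, 0 ≤ d < p} if n is even, and B = {a^ε m^δ c^d : ε, δ ∈ {0,1}, 0 ≤ d < p−1} ∪ {c^{p−1}, a c^{p−1} + m c^{p−1}} if n is odd. Then every element of B lies in OS_n^{S_n} and B is a basis of OS_n^{S_n} as a ℚ-vector space. -/

import Mathlib

noncomputable section

/-- Unordered pairs of distinct elements of `{1, …, n+1}` (as `Fin (n+1)`). -/
abbrev OSidx (n : ℕ) := {s : Sym2 (Fin (n+1)) // ¬ s.IsDiag}

/-- The exterior algebra over `ℚ` on generators indexed by unordered pairs of distinct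
elements of `{1, …, n+1}`. -/
abbrev OSamb (n : ℕ) := ExteriorAlgebra ℚ (OSidx n →₀ ℚ)

/-- The generator `e_{ij} = e_{ji}` of the ambient exterior algebra. -/
def eAmb (n : ℕ) (i j : Fin (n+1)) (h : i ≠ j) : OSamb n :=
  ExteriorAlgebra.ι ℚ (Finsupp.single ⟨s(i,j), by simp [Sym2.mk_isDiag_iff, h]⟩ 1)

/-- The Orlik–Solomon relations for the braid arrangement. -/
inductive OSRel (n : ℕ) : OSamb n → OSamb n → Prop
  | rel (i j k : Fin (n+1)) (hij : i ≠ j) (hjk : j ≠ k) (hik : i ≠ k) :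
      OSRel n (eAmb n i k hik * eAmb n j k hjk - eAmb n i j hij * eAmb n j k hjk
        + eAmb n i j hij * eAmb n i k hik) 0

/-- The Orlik–Solomon algebra `OS_n` of the braid arrangement `A_n`. -/
abbrev OS (n : ℕ) := RingQuot (OSRel n)

/-- The generator `e_{ij}` of `OS_n`, defined to be `0` when `i = j`. -/
def eOS (n : ℕ) (i j : Fin (n+1)) : OS n :=
  if h : i = j then 0 else RingQuot.mkAlgHom ℚ (OSRel n) (eAmb n i j h)

/-- `a = Σ_{1 ≤ i < j ≤ n} e_{ij}`. -/
def aOS (n : ℕ) : OS n :=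
  ∑ p ∈ Finset.univ.filter (fun p : Fin n × Fin n => p.1 < p.2),
    eOS n p.1.castSucc p.2.castSucc

/-- `m = Σ_{1 ≤ i ≤ n} e_{i,n+1}`. -/
def mOS (n : ℕ) : OS n := ∑ i : Fin n, eOS n i.castSucc (Fin.last n)

/-- `c = Σ_{1 ≤ i < j ≤ n} (e_{ij} e_{i,n+1} + e_{ij} e_{j,n+1})`. -/
def cOS (n : ℕ) : OS n :=
  ∑ p ∈ Finset.univ.filter (fun p : Fin n × Fin n => p.1 < p.2),
    (eOS n p.1.castSucc p.2.castSucc * eOS n p.1.castSucc (Fin.last n)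
      + eOS n p.1.castSucc p.2.castSucc * eOS n p.2.castSucc (Fin.last n))

/-- `g = a·m − p·c` with `p = ⌊(n+1)/2⌋`. -/
def gOS (n : ℕ) : OS n := aOS n * mOS n - ((n+1)/2 : ℕ) • cOS n

/-- The action of a permutation on the index set of unordered pairs. -/
def OSpermIdx (n : ℕ) (σ : Equiv.Perm (Fin (n+1))) : OSidx n → OSidx n :=
  fun s => ⟨Sym2.map σ s.1, by
    obtain ⟨⟨x, y⟩, hs⟩ := s
    intro hd
    rw [Sym2.map_pair_eq, Sym2.mk_isDiag_iff] at hd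
    exact hs (Sym2.mk_isDiag_iff.mpr (σ.injective hd))⟩

/-- The algebra endomorphism of the ambient exterior algebra induced by a permutation. -/
def OSpermAmb (n : ℕ) (σ : Equiv.Perm (Fin (n+1))) : OSamb n →ₐ[ℚ] OSamb n :=
  ExteriorAlgebra.lift ℚ
    ⟨(ExteriorAlgebra.ι ℚ).comp (Finsupp.lmapDomain ℚ ℚ (OSpermIdx n σ)),
      fun m => by simp [ExteriorAlgebra.ι_sq_zero]⟩

lemma OSpermAmb_e (n : ℕ) (σ : Equiv.Perm (Fin (n+1))) (i j : Fin (n+1)) (h : i ≠ j) :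
    OSpermAmb n σ (eAmb n i j h) = eAmb n (σ i) (σ j) (fun hh => h (σ.injective hh)) := by
  simp only [OSpermAmb, eAmb, ExteriorAlgebra.lift_ι_apply, LinearMap.comp_apply,
    Finsupp.lmapDomain_apply, Finsupp.mapDomain_single]
  congr 1

/-- The algebra endomorphism of `OS_n` induced by a permutation of `{1, …, n+1}`. -/
def OSperm (n : ℕ) (σ : Equiv.Perm (Fin (n+1))) : OS n →ₐ[ℚ] OS n :=
  RingQuot.liftAlgHom ℚ
    ⟨(RingQuot.mkAlgHom ℚ (OSRel n)).comp (OSpermAmb n σ), by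
      intro x y h
      cases h with
      | rel i j k hij hjk hik =>
        simp only [AlgHom.comp_apply, map_sub, map_add, map_mul, map_zero, OSpermAmb_e]
        have := RingQuot.mkAlgHom_rel ℚ (OSRel.rel (σ i) (σ j) (σ k)
          (fun hh => hij (σ.injective hh)) (fun hh => hjk (σ.injective hh))
          (fun hh => hik (σ.injective hh)))
        simpa [map_sub, map_add, map_mul] using this⟩

/-- The subalgebra of `S_n`-invariants of `OS_n`, where `S_n` is the subgroup of permutations
of `{1, …, n+1}` fixing `n+1`. -/
def OSinv (n : ℕ) : Subalgebra ℚ (OS n) where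
  carrier := {x | ∀ σ : Equiv.Perm (Fin (n+1)), σ (Fin.last n) = Fin.last n → OSperm n σ x = x}
  mul_mem' := fun hx hy σ hσ => by rw [map_mul, hx σ hσ, hy σ hσ]
  add_mem' := fun hx hy σ hσ => by rw [map_add, hx σ hσ, hy σ hσ]
  one_mem' := fun σ _ => map_one _
  zero_mem' := fun σ _ => map_zero _
  algebraMap_mem' := fun r σ hσ => AlgHom.commutes _ r

/-- The subalgebra of `S_{n+1}`-invariants of `OS_n`. -/
def OSinvFull (n : ℕ) : Subalgebra ℚ (OS n) where
  carrier := {x | ∀ σ : Equiv.Perm (Fin (n+1)), OSperm n σ x = x}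
  mul_mem' := fun hx hy σ => by rw [map_mul, hx σ, hy σ]
  add_mem' := fun hx hy σ => by rw [map_add, hx σ, hy σ]
  one_mem' := fun σ => map_one _
  zero_mem' := fun σ => map_zero _
  algebraMap_mem' := fun r σ => AlgHom.commutes _ r

/-- The degree-`d` graded piece of `OS_n`: the image in `OS_n` of the degree-`d` component of
the exterior algebra. -/
def OSdeg (n : ℕ) (d : ℕ) : Submodule ℚ (OS n) :=
  Submodule.map (RingQuot.mkAlgHom ℚ (OSRel n)).toLinearMap
    ((LinearMap.range (ExteriorAlgebra.ι ℚ : (OSidx n →₀ ℚ) →ₗ[ℚ] OSamb n)) ^ d)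

/-- The degree-`d` graded piece of the invariant subalgebra `OS_n^{S_n}`. -/
def OSinvDeg (n : ℕ) (d : ℕ) : Submodule ℚ (OS n) :=
  Subalgebra.toSubmodule (OSinv n) ⊓ OSdeg n d

namespace OS

/-!
The residue of a form along the hyperplane `x_u = x_v` is a derivation twisted by the restriction
to that hyperplane, and an element all of whose residues vanish is a scalar. If `z` is invariant
under all permutations of its indices, the Jacobi identity (for two residues sharing an index) and
anticommutation (for two disjoint ones) show that its second residues vanish; hence its residues
are scalars, all equal, and `z` is a combination of `1` and the sum `a` of all generators.

For invariants of `S_n` in `OS_n`, the residue along the hyperplane joining `n` to the last index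
takes values in the invariants of `S_{n-1}` in `OS_{n-1}`, and its kernel consists of the fully
symmetric elements, spanned by `1` and `a`. It maps the span of the monomials in `a`, `m`, `c` onto
the corresponding span one step below. By induction these monomials span the invariants, whose
dimension is `2 n`. The same induction gives `a c ^ q = q m c ^ q` for `n = 2 q + 1` and
`c ^ (q + 1) = a m c ^ q` for `n = 2 q + 2`, which reduce all monomials to the `2 n` elements of the
basis.
-/

open Finset

section Generators

variable {n : ℕ}

instance : IsAddTorsionFree (OS n) := .of_module_rat _

@[simp] lemma eOS_self (i : Fin (n + 1)) : eOS n i i = 0 := by simp [eOS]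

lemma eOS_of_ne {i j : Fin (n + 1)} (h : i ≠ j) :
    eOS n i j = RingQuot.mkAlgHom ℚ (OSRel n) (eAmb n i j h) := by simp [eOS, h]

lemma eOS_comm (i j : Fin (n + 1)) : eOS n i j = eOS n j i := by
  rcases eq_or_ne i j with rfl | h
  · rfl
  · rw [eOS_of_ne h, eOS_of_ne h.symm]
    unfold eAmb
    congr 4
    exact Sym2.eq_swap

lemma eOS_mul_add_swap (i j k l : Fin (n + 1)) :
    eOS n i j * eOS n k l + eOS n k l * eOS n i j = 0 := by
  rcases eq_or_ne i j with rfl | hij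
  · simp
  rcases eq_or_ne k l with rfl | hkl
  · simp
  rw [eOS_of_ne hij, eOS_of_ne hkl, ← map_mul, ← map_mul, ← map_add, eAmb, eAmb,
    ExteriorAlgebra.ι_add_mul_swap, map_zero]

lemma eOS_mul_swap (i j k l : Fin (n + 1)) :
    eOS n i j * eOS n k l = -(eOS n k l * eOS n i j) :=
  eq_neg_of_add_eq_zero_left (eOS_mul_add_swap i j k l)

@[simp] lemma eOS_mul_self (i j : Fin (n + 1)) : eOS n i j * eOS n i j = 0 :=
  self_eq_neg.mp (eOS_mul_swap i j i j)

lemma arnold (i j k : Fin (n + 1)) :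
    eOS n i k * eOS n j k - eOS n i j * eOS n j k + eOS n i j * eOS n i k = 0 := by
  rcases eq_or_ne i j with rfl | hij
  · simp
  rcases eq_or_ne j k with rfl | hjk
  · simp
  rcases eq_or_ne i k with rfl | hik
  · simp [eOS_comm j i]
  rw [eOS_of_ne hij, eOS_of_ne hjk, eOS_of_ne hik]
  simpa using RingQuot.mkAlgHom_rel ℚ (OSRel.rel i j k hij hjk hik)

lemma adjoin_eOS : Algebra.adjoin ℚ {x : OS n | ∃ i j, x = eOS n i j} = ⊤ := by
  refine Algebra.eq_top_iff.mpr fun x => ?_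
  obtain ⟨y, rfl⟩ := RingQuot.mkAlgHom_surjective ℚ (OSRel n) x
  induction y using ExteriorAlgebra.induction with
  | algebraMap r => rw [AlgHom.commutes]; exact Subalgebra.algebraMap_mem _ r
  | mul x y hx hy => rw [map_mul]; exact Subalgebra.mul_mem _ hx hy
  | add x y hx hy => rw [map_add]; exact Subalgebra.add_mem _ hx hy
  | ι v =>
    induction v using Finsupp.induction_linear with
    | zero => simp
    | add v w hv hw => rw [map_add, map_add]; exact Subalgebra.add_mem _ hv hw
    | single s r =>
      obtain ⟨⟨i, j⟩, hs⟩ := s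
      have hij : i ≠ j := fun h => hs (Sym2.mk_isDiag_iff.mpr h)
      have hgen : eOS n i j ∈ Algebra.adjoin ℚ {x : OS n | ∃ i j, x = eOS n i j} :=
        Algebra.subset_adjoin ⟨i, j, rfl⟩
      rw [eOS_of_ne hij] at hgen
      rw [← mul_one r, ← smul_eq_mul, ← Finsupp.smul_single, map_smul, map_smul]
      exact Subalgebra.smul_mem _ hgen r

@[elab_as_elim]
protected lemma induction {P : OS n → Prop} (eOS : ∀ i j, P (eOS n i j))
    (algebraMap : ∀ r : ℚ, P (algebraMap ℚ (OS n) r))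
    (add : ∀ x y, P x → P y → P (x + y)) (mul : ∀ x y, P x → P y → P (x * y)) (x : OS n) :
    P x := by
  have hx : x ∈ Algebra.adjoin ℚ {x : OS n | ∃ i j, x = _root_.eOS n i j} :=
    adjoin_eOS ▸ Algebra.mem_top
  induction hx using Algebra.adjoin_induction with
  | mem x hx => obtain ⟨i, j, rfl⟩ := hx; exact eOS i j
  | algebraMap r => exact algebraMap r
  | add x y _ _ hx hy => exact add x y hx hy
  | mul x y _ _ hx hy => exact mul x y hx hy

@[elab_as_elim]
lemma induction_mul_eOS {P : OS n → Prop} (one : P 1) (add : ∀ x y, P x → P y → P (x + y))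
    (smul : ∀ (r : ℚ) x, P x → P (r • x)) (mul_eOS : ∀ x i j, P x → P (x * eOS n i j))
    (x : OS n) : P x := by
  suffices ∀ w, P w → P (w * x) by simpa using this 1 one
  induction x using OS.induction with
  | eOS i j => exact fun w hw => mul_eOS w i j hw
  | algebraMap r =>
    intro w hw
    rw [← Algebra.commutes, ← Algebra.smul_def]
    exact smul r w hw
  | add x y hx hy => exact fun w hw => mul_add w x y ▸ add _ _ (hx w hw) (hy w hw)
  | mul x y hx hy => exact fun w hw => mul_assoc w x y ▸ hy _ (hx w hw)

@[ext high]
lemma algHom_ext {C : Type*} [Semiring C] [Algebra ℚ C] {f g : OS n →ₐ[ℚ] C}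
    (h : ∀ i j, f (eOS n i j) = g (eOS n i j)) : f = g :=
  AlgHom.ext_of_adjoin_eq_top adjoin_eOS (by rintro _ ⟨i, j, rfl⟩; exact h i j)

end Generators

/-- A family of elements satisfying the relations between the generators `e_{ij}`; such families
are the algebra homomorphisms out of `OS n`, see `OS.lift`. -/
structure ArnoldFamily (n : ℕ) (C : Type*) [Ring C] where
  /-- The image of `e_{ij}`. -/
  toFun : Fin (n + 1) → Fin (n + 1) → C
  self : ∀ i, toFun i i = 0
  comm : ∀ i j, toFun i j = toFun j i
  mul_add_swap : ∀ i j k l, toFun i j * toFun k l + toFun k l * toFun i j = 0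
  arnold : ∀ i j k,
    toFun i k * toFun j k - toFun i j * toFun j k + toFun i j * toFun i k = 0

section Lift

variable {n : ℕ} {C : Type*} [Ring C] [Algebra ℚ C] (g : ArnoldFamily n C)

/-- The linear extension of a family of elements to the degree-one part of the exterior
algebra. -/
def linearLift : (OSidx n →₀ ℚ) →ₗ[ℚ] C :=
  Finsupp.linearCombination ℚ fun s => Sym2.lift ⟨g.toFun, g.comm⟩ s.1

lemma linearLift_mul_add_swap (x y : OSidx n →₀ ℚ) :
    linearLift g x * linearLift g y + linearLift g y * linearLift g x = 0 := by
  let μ := LinearMap.mul ℚ C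
  suffices μ.compl₁₂ (linearLift g) (linearLift g) + μ.flip.compl₁₂ (linearLift g) (linearLift g)
      = 0 by simpa [μ] using LinearMap.congr_fun₂ this x y
  ext ⟨⟨i, j⟩, _⟩ ⟨⟨k, l⟩, _⟩
  simpa [μ, linearLift] using g.mul_add_swap i j k l

lemma linearLift_mul_self (x : OSidx n →₀ ℚ) : linearLift g x * linearLift g x = 0 := by
  have : IsAddTorsionFree C := .of_module_rat C
  exact self_eq_neg.mp (eq_neg_of_add_eq_zero_left (linearLift_mul_add_swap g x x))

lemma lift_linearLift_eAmb {i j : Fin (n + 1)} (h : i ≠ j) :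
    ExteriorAlgebra.lift ℚ ⟨linearLift g, linearLift_mul_self g⟩ (eAmb n i j h) = g.toFun i j := by
  simp [eAmb, linearLift]

/-- The universal property of the Orlik–Solomon algebra. -/
def lift : OS n →ₐ[ℚ] C :=
  RingQuot.liftAlgHom ℚ ⟨ExteriorAlgebra.lift ℚ ⟨linearLift g, linearLift_mul_self g⟩, by
    rintro _ _ ⟨i, j, k, hij, hjk, hik⟩
    simpa only [map_sub, map_add, map_mul, map_zero, lift_linearLift_eAmb] using g.arnold i j k⟩

@[simp] lemma lift_eOS (i j : Fin (n + 1)) : lift g (eOS n i j) = g.toFun i j := by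
  rcases eq_or_ne i j with rfl | h
  · rw [eOS_self, map_zero, g.self]
  · rw [eOS_of_ne h, lift, RingQuot.liftAlgHom_mkAlgHom_apply, lift_linearLift_eAmb]

instance : Nontrivial (OS n) :=
  (lift (C := ℚ) ⟨0, by simp, by simp, by simp, by simp⟩ : OS n →ₐ[ℚ] ℚ).toRingHom.domain_nontrivial

end Lift

section Functoriality

variable {m n k : ℕ}

/-- The algebra homomorphism `e_{ij} ↦ e_{f i, f j}` induced by a map `f` of index sets. Since
`e_{ii} = 0`, it kills the generators whose indices are identified by `f`. -/
def map (f : Fin (m + 1) → Fin (n + 1)) : OS m →ₐ[ℚ] OS n :=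
  lift ⟨fun i j => eOS n (f i) (f j), fun _ => eOS_self _, fun _ _ => eOS_comm _ _,
    fun _ _ _ _ => eOS_mul_add_swap _ _ _ _, fun _ _ _ => arnold _ _ _⟩

@[simp] lemma map_eOS (f : Fin (m + 1) → Fin (n + 1)) (i j : Fin (m + 1)) :
    map f (eOS m i j) = eOS n (f i) (f j) :=
  lift_eOS _ i j

lemma map_comp_map (g : Fin (n + 1) → Fin (k + 1)) (f : Fin (m + 1) → Fin (n + 1)) :
    (map g).comp (map f) = map (g ∘ f) := by
  ext i j; simp

lemma map_map (g : Fin (n + 1) → Fin (k + 1)) (f : Fin (m + 1) → Fin (n + 1)) (z : OS m) :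
    map g (map f z) = map (g ∘ f) z :=
  DFunLike.congr_fun (map_comp_map g f) z

lemma OSperm_eq_map (σ : Equiv.Perm (Fin (n + 1))) : OSperm n σ = map σ := by
  ext i j
  rcases eq_or_ne i j with rfl | h
  · simp
  · rw [map_eOS, eOS_of_ne h, OSperm, RingQuot.liftAlgHom_mkAlgHom_apply, AlgHom.comp_apply,
      OSpermAmb_e, ← eOS_of_ne]

/-- The sign automorphism, acting by `(-1)^d` in degree `d`. -/
def parity : OS n →ₐ[ℚ] OS n :=
  lift ⟨fun i j => -eOS n i j, by simp, fun i j => by rw [eOS_comm],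
    fun i j k l => by simpa using eOS_mul_add_swap i j k l,
    fun i j k => by simpa using arnold i j k⟩

@[simp] lemma parity_eOS (i j : Fin (n + 1)) : parity (eOS n i j) = -eOS n i j := lift_eOS _ i j

@[simp] lemma parity_parity (z : OS n) : parity (parity z) = z := by
  have : (parity (n := n)).comp parity = AlgHom.id ℚ (OS n) := by ext i j; simp
  exact DFunLike.congr_fun this z

lemma map_parity (f : Fin (m + 1) → Fin (n + 1)) (z : OS m) :
    map f (parity z) = parity (map f z) := by
  have : (map f).comp parity = parity.comp (map f) := by ext i j; simp
  exact DFunLike.congr_fun this z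

/-- The retraction of `OS n` killing every generator `e_{ij}` with an index outside `S`. -/
def proj (S : Finset (Fin (n + 1))) : OS n →ₐ[ℚ] OS n :=
  lift ⟨fun i j => if i ∈ S ∧ j ∈ S then eOS n i j else 0, by simp,
    fun i j => by simp only [and_comm, eOS_comm],
    fun i j k l => by
      split_ifs <;> simp [eOS_mul_add_swap],
    fun i j k => by
      by_cases i ∈ S <;> by_cases j ∈ S <;> by_cases k ∈ S <;> simp [*, arnold]⟩

lemma proj_eOS (S : Finset (Fin (n + 1))) (i j : Fin (n + 1)) :
    proj S (eOS n i j) = if i ∈ S ∧ j ∈ S then eOS n i j else 0 :=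
  lift_eOS _ i j

end Functoriality

section TwistedDerivation

variable {A B C : Type*} [Ring A] [Ring B] [Ring C] [Algebra ℚ A] [Algebra ℚ B] [Algebra ℚ C]

/-- A linear map satisfying the Leibniz rule with respect to the bimodule structure on `B` given
by two algebra homomorphisms. Residues and their compositions are compared by checking that they
are twisted derivations with the same values on generators. -/
def IsTwistedDerivation (f g : A →ₐ[ℚ] B) (D : A →ₗ[ℚ] B) : Prop :=
  ∀ x y, D (x * y) = f x * D y + D x * g y

namespace IsTwistedDerivation

variable {f g : A →ₐ[ℚ] B} {D D' : A →ₗ[ℚ] B}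

lemma map_one (hD : IsTwistedDerivation f g D) : D 1 = 0 := by
  simpa using hD 1 1

lemma sub (hD : IsTwistedDerivation f g D) (hD' : IsTwistedDerivation f g D') :
    IsTwistedDerivation f g (D - D') := fun x y => by
  simp only [LinearMap.sub_apply, hD x y, hD' x y]; noncomm_ring

lemma add (hD : IsTwistedDerivation f g D) (hD' : IsTwistedDerivation f g D') :
    IsTwistedDerivation f g (D + D') := fun x y => by
  simp only [LinearMap.add_apply, hD x y, hD' x y]; noncomm_ring

lemma algHom_comp (hD : IsTwistedDerivation f g D) (h : B →ₐ[ℚ] C) :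
    IsTwistedDerivation (h.comp f) (h.comp g) (h.toLinearMap ∘ₗ D) := fun x y => by
  simp [hD x y]

lemma comp_algHom (hD : IsTwistedDerivation f g D) (h : C →ₐ[ℚ] A) :
    IsTwistedDerivation (f.comp h) (g.comp h) (D ∘ₗ h.toLinearMap) := fun x y => by
  simp [hD (h x) (h y)]

variable {n : ℕ} {f g : OS n →ₐ[ℚ] B} {D D' : OS n →ₗ[ℚ] B}

lemma eq_zero (hD : IsTwistedDerivation f g D) (h : ∀ i j, D (eOS n i j) = 0) : D = 0 := by
  ext z
  induction z using OS.induction with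
  | eOS i j => exact h i j
  | algebraMap r => rw [Algebra.algebraMap_eq_smul_one, map_smul, hD.map_one, smul_zero]; rfl
  | add x y hx hy => rw [map_add, hx, hy, map_add]
  | mul x y hx hy => simp [hD x y, hx, hy]

lemma eq_of_eOS (hD : IsTwistedDerivation f g D) (hD' : IsTwistedDerivation f g D')
    (h : ∀ i j, D (eOS n i j) = D' (eOS n i j)) : D = D' :=
  sub_eq_zero.mp <| (hD.sub hD').eq_zero fun i j => by simp [h]

end IsTwistedDerivation

end TwistedDerivation

section Residue

variable {m n : ℕ}

/-- The map of index sets identifying `v` with `u`. -/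
def merge (u v : Fin (n + 1)) : Fin (n + 1) → Fin (n + 1) := Function.update id v u

@[simp] lemma merge_right (u v : Fin (n + 1)) : merge u v v = u := Function.update_self ..

@[simp] lemma merge_left (u v : Fin (n + 1)) : merge u v u = u := by
  by_cases h : u = v <;> simp [merge, h]

lemma merge_of_ne {v i : Fin (n + 1)} (u : Fin (n + 1)) (h : i ≠ v) : merge u v i = i :=
  Function.update_of_ne h ..

lemma comp_merge {X : Type*} {f : Fin (n + 1) → X} {u v : Fin (n + 1)} (h : f u = f v) :
    f ∘ merge u v = f := by
  simp [merge, Function.comp_update, h]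

/-- `1` if `{i, j}` and `{u, v}` are the same pair of distinct indices, `0` otherwise. -/
def edgeIndicator (u v i j : Fin (n + 1)) : ℚ := if i ≠ j ∧ s(i, j) = s(u, v) then 1 else 0

lemma edgeIndicator_comm (u v i j : Fin (n + 1)) :
    edgeIndicator u v i j = edgeIndicator u v j i := by
  simp only [edgeIndicator, Sym2.eq_swap (a := i), ne_comm (a := i)]

lemma edgeIndicator_smul_congr {u v j k : Fin (n + 1)} {x y : OS n}
    (h : merge u v j = merge u v k → x = y) :
    edgeIndicator u v j k • x = edgeIndicator u v j k • y := by
  unfold edgeIndicator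
  split_ifs with hjk
  · rw [h]
    obtain ⟨rfl, rfl⟩ | ⟨rfl, rfl⟩ := Sym2.eq_iff.mp hjk.2 <;> simp
  · rw [zero_smul, zero_smul]

/-- The upper triangular matrices which assemble the restriction to the hyperplane
`x_u = x_v` (diagonal entries, up to sign) and the residue along it (upper right corner). -/
def residueFamily (u v : Fin (n + 1)) : ArnoldFamily n (Matrix (Fin 2) (Fin 2) (OS n)) where
  toFun i j := !![eOS n (merge u v i) (merge u v j), edgeIndicator u v i j • 1;
    0, -eOS n (merge u v i) (merge u v j)]
  self i := by ext a b; fin_cases a <;> fin_cases b <;> simp [edgeIndicator]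
  comm i j := by rw [eOS_comm, edgeIndicator_comm]
  mul_add_swap i j k l := by
    ext a b
    fin_cases a <;> fin_cases b <;> simp [eOS_mul_add_swap]
  arnold i j k := by
    have hij := edgeIndicator_smul_congr (u := u) (v := v) (j := i) (k := j)
      (x := eOS n (merge u v j) (merge u v k)) (y := eOS n (merge u v i) (merge u v k))
      fun h => by rw [h]
    have hik := edgeIndicator_smul_congr (u := u) (v := v) (j := i) (k := k)
      (x := eOS n (merge u v i) (merge u v j)) (y := eOS n (merge u v j) (merge u v k))
      fun h => by rw [h, eOS_comm]
    have hjk := edgeIndicator_smul_congr (u := u) (v := v) (j := j) (k := k)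
      (x := eOS n (merge u v i) (merge u v k)) (y := eOS n (merge u v i) (merge u v j))
      fun h => by rw [h]
    ext a b
    fin_cases a <;> fin_cases b <;> simp [arnold, hij, hik, hjk]
    abel

/-- The residue along the hyperplane `x_u = x_v`, with values in the forms not involving `v`
(see `residue_eOS` and `residue_mul`). -/
def residue (u v : Fin (n + 1)) : OS n →ₗ[ℚ] OS n :=
  Matrix.entryLinearMap ℚ (OS n) 0 1 ∘ₗ (lift (residueFamily u v)).toLinearMap

lemma residue_eOS (u v i j : Fin (n + 1)) :
    residue u v (eOS n i j) = edgeIndicator u v i j • 1 := by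
  simp [residue, residueFamily]

lemma lift_residueFamily (u v : Fin (n + 1)) (z : OS n) :
    lift (residueFamily u v) z =
      !![map (merge u v) z, residue u v z; 0, parity (map (merge u v) z)] := by
  suffices lift (residueFamily u v) z 0 0 = map (merge u v) z ∧
      lift (residueFamily u v) z 1 0 = 0 ∧
      lift (residueFamily u v) z 1 1 = parity (map (merge u v) z) by
    obtain ⟨h00, h10, h11⟩ := this
    rw [Matrix.eta_fin_two (lift (residueFamily u v) z), h00, h10, h11]
    rfl
  induction z using OS.induction with
  | eOS i j => simp [residueFamily]
  | algebraMap r => simp [Matrix.algebraMap_matrix_apply]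
  | add x y hx hy => simp [hx, hy]
  | mul x y hx hy => simp [Matrix.mul_apply, hx, hy]

lemma isTwistedDerivation_residue (u v : Fin (n + 1)) :
    IsTwistedDerivation (map (merge u v)) (parity.comp (map (merge u v))) (residue u v) :=
  fun x y => by
    have h := map_mul (lift (residueFamily u v)) x y
    simp only [lift_residueFamily] at h
    simpa using congrFun₂ h 0 1

lemma residue_mul (u v : Fin (n + 1)) (x y : OS n) : residue u v (x * y) =
    map (merge u v) x * residue u v y + residue u v x * parity (map (merge u v) y) :=
  isTwistedDerivation_residue u v x y

@[simp] lemma residue_one (u v : Fin (n + 1)) : residue u v 1 = 0 :=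
  (isTwistedDerivation_residue u v).map_one

lemma residue_parity (u v : Fin (n + 1)) (z : OS n) :
    residue u v (parity z) = -parity (residue u v z) := by
  have hl := (isTwistedDerivation_residue u v).comp_algHom parity
  have hr := (isTwistedDerivation_residue u v).algHom_comp parity
  have : (map (merge u v)).comp parity = parity.comp (map (merge u v)) := by ext i j; simp
  rw [AlgHom.comp_assoc, this] at hl
  refine eq_neg_of_add_eq_zero_left (DFunLike.congr_fun ((hl.add hr).eq_zero fun i j => ?_) z)
  simp [residue_eOS]

lemma map_residue (f : Fin (m + 1) → Fin (n + 1)) {u v : Fin (m + 1)}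
    (hu : ∀ i, f i = f u → i = u) (hv : ∀ i, f i = f v → i = v) (z : OS m) :
    map f (residue u v z) = residue (f u) (f v) (map f z) := by
  have hl := (isTwistedDerivation_residue u v).algHom_comp (map f)
  have hr := (isTwistedDerivation_residue (f u) (f v)).comp_algHom (map f)
  have hmerge : merge (f u) (f v) ∘ f = f ∘ merge u v := by
    funext i
    rcases eq_or_ne i v with rfl | hi
    · simp
    · simp [merge_of_ne _ hi, merge_of_ne (f u) (fun h => hi (hv i h))]
  have hparity : (map f).comp parity = parity.comp (map f) := by ext i j; simp
  rw [AlgHom.comp_assoc, map_comp_map, hmerge] at hr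
  rw [← AlgHom.comp_assoc, hparity, AlgHom.comp_assoc, map_comp_map] at hl
  refine DFunLike.congr_fun (hl.eq_of_eOS hr fun i j => ?_) z
  have : (i ≠ j ∧ s(i, j) = s(u, v)) ↔ (f i ≠ f j ∧ s(f i, f j) = s(f u, f v)) := by
    simp only [Sym2.eq_iff]
    grind
  simp only [LinearMap.comp_apply, AlgHom.toLinearMap_apply, residue_eOS, map_smul, map_one,
    map_eOS, edgeIndicator, this]

end Residue

section SecondOrder

variable {n k : ℕ} {a b c i j u v : Fin (n + 1)}

lemma map_merge_residue (hiu : i ≠ u) (hiv : i ≠ v) (hju : j ≠ u) (hjv : j ≠ v) (z : OS n) :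
    map (merge i j) (residue u v z) = residue u v (map (merge i j) z) := by
  have key : ∀ {w}, i ≠ w → j ≠ w → ∀ l, merge i j l = merge i j w → l = w := by
    intro w hiw hjw l h
    rw [merge_of_ne i hjw.symm] at h
    rcases eq_or_ne l j with rfl | hl
    · exact absurd (merge_right i l ▸ h) hiw
    · rwa [merge_of_ne i hl] at h
  simpa [merge_of_ne i hju.symm, merge_of_ne i hjv.symm] using
    map_residue (merge i j) (key hiu hju) (key hiv hjv) z

lemma merge_comp_merge (hiv : i ≠ v) (hju : j ≠ u) (hjv : j ≠ v) :
    merge u v ∘ merge i j = merge i j ∘ merge u v := by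
  funext l
  simp only [merge, Function.comp_apply, Function.update_apply, id]
  split_ifs <;> simp_all

lemma residue_residue_anticomm (hiu : i ≠ u) (hiv : i ≠ v) (hju : j ≠ u) (hjv : j ≠ v)
    (z : OS n) : residue i j (residue u v z) = -residue u v (residue i j z) := by
  have hD : IsTwistedDerivation (map (merge i j ∘ merge u v)) (map (merge i j ∘ merge u v))
      (residue i j ∘ₗ residue u v + residue u v ∘ₗ residue i j) := fun x y => by
    simp only [LinearMap.add_apply, LinearMap.comp_apply, residue_mul, map_add, residue_parity,
      map_parity, parity_parity, map_map, map_merge_residue hiu hiv hju hjv,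
      map_merge_residue hiu.symm hju.symm hiv.symm hjv.symm, merge_comp_merge hiv hju hjv]
    noncomm_ring
  exact eq_neg_of_add_eq_zero_left
    (DFunLike.congr_fun (hD.eq_zero fun k l => by simp [residue_eOS]) z)

variable {f : Fin (n + 1) → Fin (k + 1)}

lemma isTwistedDerivation_map_residue (h : f u = f v) :
    IsTwistedDerivation (map f) (parity.comp (map f)) ((map f).toLinearMap ∘ₗ residue u v) :=
  fun x y => by
    simp [residue_mul, map_map, comp_merge h, map_parity]

lemma map_residue_comm (h : f u = f v) (z : OS n) :
    map f (residue u v z) = map f (residue v u z) := by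
  refine DFunLike.congr_fun ((isTwistedDerivation_map_residue h).eq_of_eOS
    (isTwistedDerivation_map_residue h.symm) fun i j => ?_) z
  simp [residue_eOS, edgeIndicator, Sym2.eq_swap (a := u)]

lemma map_residue_map_merge (hac : a ≠ c) (hbc : b ≠ c) (hab : a ≠ b) (hfab : f a = f b)
    (hfac : f a = f c) (z : OS n) :
    map f (residue a c (map (merge a b) z)) =
      map f (residue a c z) + map f (residue b c z) := by
  have hl := (isTwistedDerivation_map_residue hfac).comp_algHom (map (merge a b))
  rw [AlgHom.comp_assoc, map_comp_map, comp_merge hfab] at hl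
  have hr := (isTwistedDerivation_map_residue hfac).add
    (isTwistedDerivation_map_residue (hfab.symm.trans hfac))
  refine DFunLike.congr_fun (hl.eq_of_eOS hr fun i j => ?_) z
  have hsum : edgeIndicator a c (merge a b i) (merge a b j) =
      edgeIndicator a c i j + edgeIndicator b c i j := by
    simp only [edgeIndicator, merge, Function.update_apply, id, Sym2.eq_iff]
    grind
  simp [residue_eOS, hsum, add_smul]

lemma map_residue_residue_mul (hab : a ≠ b) (hac : a ≠ c) (hbc : b ≠ c) (hfab : f a = f b)
    (hfac : f a = f c) (x y : OS n) :
    map f (residue a c (residue a b (x * y))) =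
      map f x * map f (residue a c (residue a b y))
      + (map f (residue a c x) + map f (residue b c x)) * parity (map f (residue a b y))
      - map f (residue a b x) * parity (map f (residue a c y) + map f (residue b c y))
      + map f (residue a c (residue a b x)) * map f y := by
  rw [← map_residue_map_merge hac hbc hab hfab hfac, ← map_residue_map_merge hac hbc hab hfab hfac]
  simp only [residue_mul, map_add, map_mul, map_map, ← Function.comp_assoc, comp_merge hfab,
    comp_merge hfac, residue_parity, map_parity, map_neg, parity_parity]
  noncomm_ring

/-- The Jacobi identity for residues: the three terms are the ways of colliding the points
`a`, `b`, `c` two at a time. -/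
lemma map_residue_jacobi (hab : a ≠ b) (hac : a ≠ c) (hbc : b ≠ c) (hfab : f a = f b)
    (hfac : f a = f c) (z : OS n) :
    map f (residue a c (residue a b z)) + map f (residue c a (residue c b z))
      + map f (residue a b (residue a c z)) = 0 := by
  let R (i j k : Fin (n + 1)) := (map f).toLinearMap ∘ₗ residue i k ∘ₗ residue i j
  have hfbc := hfab.symm.trans hfac
  have hD : IsTwistedDerivation (map f) (map f) (R a b c + R c b a + R a c b) := fun x y => by
    simp only [R, LinearMap.add_apply, LinearMap.comp_apply, AlgHom.toLinearMap_apply,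
      map_residue_residue_mul hab hac hbc hfab hfac,
      map_residue_residue_mul hbc.symm hac.symm hab.symm hfbc.symm hfac.symm,
      map_residue_residue_mul hac hab hbc.symm hfac hfab,
      map_residue_comm hfac.symm, map_residue_comm hfab.symm, map_residue_comm hfbc.symm, map_add]
    noncomm_ring
  exact DFunLike.congr_fun (hD.eq_zero fun i j => by simp [R, residue_eOS]) z

end SecondOrder

section Supported

variable {m n : ℕ} {S T : Finset (Fin (n + 1))} {u v : Fin (n + 1)} {z : OS n}

/-- The copy of the Orlik–Solomon algebra of the braid arrangement on the index set `S`. -/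
def supported (S : Finset (Fin (n + 1))) : Subalgebra ℚ (OS n) :=
  Algebra.adjoin ℚ {x | ∃ i ∈ S, ∃ j ∈ S, x = eOS n i j}

lemma eOS_mem_supported {i j : Fin (n + 1)} (hi : i ∈ S) (hj : j ∈ S) :
    eOS n i j ∈ supported S :=
  Algebra.subset_adjoin ⟨i, hi, j, hj, rfl⟩

lemma supported_le {A : Subalgebra ℚ (OS n)} (h : ∀ i ∈ S, ∀ j ∈ S, eOS n i j ∈ A) :
    supported S ≤ A :=
  Algebra.adjoin_le (by rintro _ ⟨i, hi, j, hj, rfl⟩; exact h i hi j hj)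

lemma supported_mono (h : S ⊆ T) : supported S ≤ supported T :=
  supported_le fun _ hi _ hj => eOS_mem_supported (h hi) (h hj)

lemma supported_univ : supported (univ : Finset (Fin (n + 1))) = ⊤ := by
  simp [supported, adjoin_eOS]

lemma supported_eq_bot (hS : (S : Set (Fin (n + 1))).Subsingleton) : supported S = ⊥ :=
  eq_bot_iff.mpr <| supported_le fun i hi j hj => by
    rw [hS hi hj, eOS_self]; exact zero_mem _

lemma algHom_eq_of_mem_supported {C : Type*} [Ring C] [Algebra ℚ C] {f g : OS n →ₐ[ℚ] C}
    (h : ∀ i ∈ S, ∀ j ∈ S, f (eOS n i j) = g (eOS n i j)) (hz : z ∈ supported S) : f z = g z :=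
  supported_le (A := AlgHom.equalizer f g) h hz

lemma map_eq_self_of_mem_supported {f : Fin (n + 1) → Fin (n + 1)} (h : ∀ i ∈ S, f i = i)
    (hz : z ∈ supported S) : map f z = z :=
  algHom_eq_of_mem_supported (g := AlgHom.id ℚ (OS n))
    (fun i hi j hj => by simp [h i hi, h j hj]) hz

lemma map_mem_supported {f : Fin (n + 1) → Fin (m + 1)} {T : Finset (Fin (m + 1))}
    (h : ∀ i ∈ S, f i ∈ T) (hz : z ∈ supported S) : map f z ∈ supported T :=
  supported_le (A := (supported T).comap (map f))
    (fun i hi j hj => by simpa using eOS_mem_supported (h i hi) (h j hj)) hz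

lemma parity_mem_supported (hz : z ∈ supported S) : parity z ∈ supported S :=
  supported_le (A := (supported S).comap parity)
    (fun i hi j hj => by simpa using eOS_mem_supported hi hj) hz

lemma proj_mem_supported_inter (hz : z ∈ supported T) : proj S z ∈ supported (T ∩ S) :=
  supported_le (A := (supported (T ∩ S)).comap (proj S)) (fun i hi j hj => by
    rw [Subalgebra.mem_comap, proj_eOS]
    split_ifs with h
    · exact eOS_mem_supported (by simp [*]) (by simp [*])
    · exact zero_mem _) hz

lemma proj_eq_self_of_mem_supported (hz : z ∈ supported S) : proj S z = z :=
  algHom_eq_of_mem_supported (g := AlgHom.id ℚ (OS n))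
    (fun i hi j hj => by simp [proj_eOS, hi, hj]) hz

lemma mem_supported_inter (hS : z ∈ supported S) (hT : z ∈ supported T) :
    z ∈ supported (S ∩ T) :=
  proj_eq_self_of_mem_supported hT ▸ proj_mem_supported_inter hS

lemma IsTwistedDerivation.eq_zero_of_mem_supported {B : Type*} [Ring B] [Algebra ℚ B]
    {f g : OS n →ₐ[ℚ] B} {D : OS n →ₗ[ℚ] B} (hD : IsTwistedDerivation f g D)
    (h : ∀ i ∈ S, ∀ j ∈ S, D (eOS n i j) = 0) (hz : z ∈ supported S) : D z = 0 := by
  induction hz using Algebra.adjoin_induction with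
  | mem x hx => obtain ⟨i, hi, j, hj, rfl⟩ := hx; exact h i hi j hj
  | algebraMap r => rw [Algebra.algebraMap_eq_smul_one, map_smul, hD.map_one, smul_zero]
  | add x y _ _ hx hy => rw [map_add, hx, hy, add_zero]
  | mul x y _ _ hx hy => rw [hD x y, hx, hy, mul_zero, zero_mul, add_zero]

lemma residue_eq_zero (h : u ∉ S ∨ v ∉ S) (hz : z ∈ supported S) : residue u v z = 0 := by
  refine (isTwistedDerivation_residue u v).eq_zero_of_mem_supported (fun i hi j hj => ?_) hz
  have : ¬ (i ≠ j ∧ s(i, j) = s(u, v)) := by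
    rw [Sym2.eq_iff]
    rintro ⟨_, ⟨rfl, rfl⟩ | ⟨rfl, rfl⟩⟩ <;> tauto
  rw [residue_eOS, edgeIndicator, if_neg this, zero_smul]

@[simp] lemma residue_self (u : Fin (n + 1)) (z : OS n) : residue u u z = 0 :=
  DFunLike.congr_fun ((isTwistedDerivation_residue u u).eq_zero fun i j => by
    rw [residue_eOS, edgeIndicator, if_neg (by rw [Sym2.eq_iff]; grind), zero_smul]) z

lemma residue_mem_supported (hu : u ∈ S) (hz : z ∈ supported S) :
    residue u v z ∈ supported (S.erase v) := by
  rcases eq_or_ne u v with rfl | huv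
  · rw [residue_self]; exact zero_mem _
  have hmerge : ∀ i ∈ S, merge u v i ∈ S.erase v := fun i hi => by
    rcases eq_or_ne i v with rfl | hiv
    · simp [huv, hu]
    · simp [merge_of_ne u hiv, hiv, hi]
  induction hz using Algebra.adjoin_induction with
  | mem x hx =>
    obtain ⟨i, -, j, -, rfl⟩ := hx
    rw [residue_eOS]
    exact Subalgebra.smul_mem _ (one_mem _) _
  | algebraMap r =>
    rw [Algebra.algebraMap_eq_smul_one, map_smul, residue_one, smul_zero]
    exact zero_mem _
  | add x y _ _ hx hy => rw [map_add]; exact add_mem hx hy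
  | mul x y hxS hyS hx hy =>
    rw [residue_mul]
    exact add_mem (mul_mem (map_mem_supported hmerge hxS) hy)
      (mul_mem hx (parity_mem_supported (map_mem_supported hmerge hyS)))

lemma proj_add_sum_residue_mul_eOS_of_ne {k l : Fin (n + 1)} (hk : k ≠ v) (hl : l ≠ v)
    (z : OS n) :
    proj (univ.erase v) (z * eOS n k l) + ∑ i, residue i v (z * eOS n k l) * eOS n i v =
      (proj (univ.erase v) z + ∑ i, residue i v z * eOS n i v) * eOS n k l := by
  have hres : ∀ i, residue i v (z * eOS n k l) * eOS n i v =
      residue i v z * eOS n i v * eOS n k l := fun i => by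
    have : ¬ (k ≠ l ∧ s(k, l) = s(i, v)) := by rw [Sym2.eq_iff]; grind
    rw [residue_mul, residue_eOS, edgeIndicator, if_neg this, zero_smul, mul_zero, zero_add,
      map_eOS, merge_of_ne i hk, merge_of_ne i hl, parity_eOS, mul_assoc, mul_assoc,
      eOS_mul_swap i v k l, neg_mul]
  simp [add_mul, sum_mul, hres, proj_eOS, hk, hl]

lemma residue_mul_eOS_right {k : Fin (n + 1)} (hk : k ≠ v) (i : Fin (n + 1)) (z : OS n) :
    residue i v (z * eOS n k v) =
      (if i = k then map (merge k v) z else 0) - residue i v z * eOS n i k := by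
  have hind : edgeIndicator i v k v = if i = k then 1 else 0 := by
    simp only [edgeIndicator, Sym2.eq_iff]; grind
  rw [residue_mul, residue_eOS, hind, map_eOS, merge_of_ne i hk, merge_right, parity_eOS,
    eOS_comm k i, mul_neg, ← sub_eq_add_neg]
  split_ifs with h
  · rw [h, one_smul, mul_one]
  · rw [zero_smul, mul_zero]

lemma map_merge_eq_of_proj_add_sum (k : Fin (n + 1))
    (hz : proj (univ.erase v) z + ∑ i, residue i v z * eOS n i v = z) :
    map (merge k v) z = proj (univ.erase v) z + ∑ i, residue i v z * eOS n i k := by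
  have hfix : ∀ y ∈ supported (univ.erase v), map (merge k v) y = y := fun y hy =>
    map_eq_self_of_mem_supported (fun i hi => merge_of_ne k (ne_of_mem_erase hi)) hy
  have htop : ∀ y : OS n, y ∈ supported univ := fun y => supported_univ ▸ Algebra.mem_top
  have hres : ∀ i, map (merge k v) (residue i v z * eOS n i v) = residue i v z * eOS n i k :=
    fun i => by
      rcases eq_or_ne i v with rfl | hi
      · simp
      · rw [map_mul, map_eOS, merge_of_ne k hi, merge_right,
          hfix _ (residue_mem_supported (mem_univ i) (htop z))]
  have hproj : proj (univ.erase v) z ∈ supported (univ.erase v) := by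
    simpa using proj_mem_supported_inter (S := univ.erase v) (htop z)
  nth_rw 1 [← hz]
  rw [map_add, map_sum, hfix _ hproj, sum_congr rfl fun i _ => hres i]

lemma proj_add_sum_residue_mul_eOS_right {k : Fin (n + 1)} (hk : k ≠ v)
    (hz : proj (univ.erase v) z + ∑ i, residue i v z * eOS n i v = z) :
    proj (univ.erase v) (z * eOS n k v) + ∑ i, residue i v (z * eOS n k v) * eOS n i v =
      z * eOS n k v := by
  have hproj : proj (univ.erase v) (z * eOS n k v) = 0 := by simp [proj_eOS]
  have harnold : ∀ i, eOS n i v * eOS n k v = eOS n i k * eOS n k v - eOS n i k * eOS n i v :=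
    fun i => sub_eq_zero.mp (by rw [← arnold i k v]; abel)
  calc _ = map (merge k v) z * eOS n k v - ∑ i, residue i v z * eOS n i k * eOS n i v := by
        simp [hproj, residue_mul_eOS_right hk, sub_mul, sum_sub_distrib]
    _ = (proj (univ.erase v) z + ∑ i, residue i v z * eOS n i v) * eOS n k v := by
        simp only [map_merge_eq_of_proj_add_sum k hz, add_mul, sum_mul, mul_assoc, harnold,
          mul_sub, sum_sub_distrib, add_sub_assoc]
    _ = _ := by rw [hz]

lemma proj_add_sum_residue_mul (v : Fin (n + 1)) (z : OS n) :
    proj (univ.erase v) z + ∑ i, residue i v z * eOS n i v = z := by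
  induction z using OS.induction_mul_eOS with
  | one => simp
  | add x y hx hy =>
    simp only [map_add, add_mul, sum_add_distrib]
    rw [add_add_add_comm, hx, hy]
  | smul r x hx => simp only [map_smul, smul_mul_assoc, ← smul_sum, ← smul_add, hx]
  | mul_eOS z k l hz =>
    rcases eq_or_ne k l with rfl | hkl
    · simp
    rcases eq_or_ne l v with rfl | hl
    · exact proj_add_sum_residue_mul_eOS_right hkl hz
    rcases eq_or_ne k v with rfl | hk
    · rw [eOS_comm k l]
      exact proj_add_sum_residue_mul_eOS_right hl hz
    · rw [proj_add_sum_residue_mul_eOS_of_ne hk hl, hz]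

lemma mem_supported_erase (hz : z ∈ supported S) (h : ∀ i ∈ S, residue i v z = 0) :
    z ∈ supported (S.erase v) := by
  have hres : ∀ i, residue i v z = 0 := fun i =>
    if hi : i ∈ S then h i hi else residue_eq_zero (.inl hi) hz
  rw [← proj_add_sum_residue_mul v z]
  simpa [hres, inter_erase] using proj_mem_supported_inter (S := univ.erase v) hz

lemma mem_bot_of_residue_eq_zero (hz : z ∈ supported S)
    (h : ∀ i ∈ S, ∀ j ∈ S, residue i j z = 0) : z ∈ (⊥ : Subalgebra ℚ (OS n)) := by
  induction S using Finset.induction_on with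
  | empty => rwa [supported_eq_bot (by simp)] at hz
  | insert v S hv ih =>
    have hzS := mem_supported_erase hz fun i hi => h i hi v (mem_insert_self v S)
    rw [erase_insert hv] at hzS
    exact ih hzS fun i hi j hj => h i (mem_insert_of_mem hi) j (mem_insert_of_mem hj)

end Supported

section Invariants

variable {n : ℕ} {S T : Finset (Fin (n + 1))} {u v : Fin (n + 1)} {z : OS n}

/-- The elements of `OS n` fixed by all permutations of the index set `S`. -/
def fixedBy (S : Finset (Fin (n + 1))) : Subalgebra ℚ (OS n) :=
  ⨅ (σ : Equiv.Perm (Fin (n + 1))) (_ : ∀ i ∉ S, σ i = i),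
    AlgHom.equalizer (map σ) (AlgHom.id ℚ (OS n))

lemma mem_fixedBy : z ∈ fixedBy S ↔
    ∀ σ : Equiv.Perm (Fin (n + 1)), (∀ i ∉ S, σ i = i) → map σ z = z := by
  simp [fixedBy, Algebra.mem_iInf]

/-- The invariants of the permutations of `S` in the Orlik–Solomon algebra on the index set `T`.
The cases needed are `T = S` and `T = insert r S` with `r ∉ S`. -/
def invariants (T S : Finset (Fin (n + 1))) : Subalgebra ℚ (OS n) := supported T ⊓ fixedBy S

lemma mem_invariants : z ∈ invariants T S ↔ z ∈ supported T ∧ z ∈ fixedBy S := Iff.rfl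

lemma map_residue_perm (σ : Equiv.Perm (Fin (n + 1))) (u v : Fin (n + 1)) (z : OS n) :
    map σ (residue u v z) = residue (σ u) (σ v) (map σ z) :=
  map_residue σ (fun _ h => σ.injective h) (fun _ h => σ.injective h) z

lemma swap_apply_of_notMem {i : Fin (n + 1)} (hu : u ∈ S) (hv : v ∈ S) (hi : i ∉ S) :
    Equiv.swap u v i = i :=
  Equiv.swap_apply_of_ne_of_ne (fun h => hi (h ▸ hu)) (fun h => hi (h ▸ hv))

lemma map_swap_of_mem_fixedBy (hz : z ∈ fixedBy S) (hu : u ∈ S) (hv : v ∈ S) :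
    map (Equiv.swap u v) z = z :=
  mem_fixedBy.mp hz _ fun _ hi => swap_apply_of_notMem hu hv hi

lemma residue_swap_eq_zero (h : residue u v z = 0) : residue v u z = 0 := by
  have hmem : residue v u z ∈ supported (univ.erase u) :=
    residue_mem_supported (mem_univ v) (supported_univ ▸ Algebra.mem_top)
  rw [← map_eq_self_of_mem_supported (f := merge v u)
      (fun i hi => merge_of_ne v (ne_of_mem_erase hi)) hmem,
    ← map_residue_comm (by simp), h, map_zero]

/-- The three terms of the Jacobi identity coincide for an invariant element. -/
lemma residue_residue_eq_zero_of_mem_invariants {k : Fin (n + 1)} (hz : z ∈ invariants S S)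
    (hu : u ∈ S) (hv : v ∈ S) (hk : k ∈ S) (huv : u ≠ v) (huk : u ≠ k) (hvk : v ≠ k) :
    residue u k (residue u v z) = 0 := by
  obtain ⟨hzS, hzfix⟩ := mem_invariants.mp hz
  set w := residue u k (residue u v z) with hw
  have hwS : w ∈ supported ((S.erase v).erase k) :=
    residue_mem_supported (by simp [huv, hu]) (residue_mem_supported hu hzS)
  let f : Fin (n + 1) → Fin (n + 1) := merge u v ∘ merge u k
  have hfv : f v = u := by simp [f, merge_of_ne u hvk]
  have hfu : f u = u := by simp [f]
  have hfk : f k = u := by simp [f]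
  have hf : ∀ i, i ≠ v → i ≠ k → f i = i := fun i hiv hik => by
    simp [f, merge_of_ne u hiv, merge_of_ne u hik]
  have hjacobi := map_residue_jacobi huv huk hvk (hfu.trans hfv.symm) (hfu.trans hfk.symm) z
  have hid : map f w = w := map_eq_self_of_mem_supported (fun i hi => by grind) hwS
  have hswap_uk : map f (residue k u (residue k v z)) = w := by
    have : map (Equiv.swap u k) w = residue k u (residue k v z) := by
      rw [hw, map_residue_perm, map_residue_perm, map_swap_of_mem_fixedBy hzfix hu hk,
        Equiv.swap_apply_left, Equiv.swap_apply_right,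
        Equiv.swap_apply_of_ne_of_ne huv.symm hvk]
    rw [← this, map_map]
    exact map_eq_self_of_mem_supported (fun i hi => by simp [Equiv.swap_apply_def]; grind) hwS
  have hswap_vk : map f (residue u v (residue u k z)) = w := by
    have : map (Equiv.swap v k) w = residue u v (residue u k z) := by
      rw [hw, map_residue_perm, map_residue_perm, map_swap_of_mem_fixedBy hzfix hv hk,
        Equiv.swap_apply_left, Equiv.swap_apply_right,
        Equiv.swap_apply_of_ne_of_ne huv huk]
    rw [← this, map_map]
    exact map_eq_self_of_mem_supported (fun i hi => by simp [Equiv.swap_apply_def]; grind) hwS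
  rw [← hw, hid, hswap_uk, hswap_vk] at hjacobi
  exact (nsmul_eq_zero_iff_right (three_ne_zero)).mp (by rw [← hjacobi]; abel)

lemma residue_mem_supported_of_mem_invariants (hz : z ∈ invariants S S) (hu : u ∈ S)
    (hv : v ∈ S) : residue u v z ∈ supported ((S.erase v).erase u) := by
  refine mem_supported_erase (residue_mem_supported hu hz.1) fun k hk => ?_
  obtain ⟨hkv, hkS⟩ := mem_erase.mp hk
  rcases eq_or_ne k u with rfl | hku
  · rw [residue_self]
  rcases eq_or_ne u v with rfl | huv
  · rw [residue_self, map_zero]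
  exact residue_swap_eq_zero
    (residue_residue_eq_zero_of_mem_invariants hz hu hv hkS huv hku.symm hkv.symm)

/-- Exchanging `{i, j}` with `{u, v}` fixes the iterated residue, because none of the four indices
occurs in it, but also changes its sign, because the two residues anticommute. -/
lemma residue_residue_eq_zero_of_disjoint {i j : Fin (n + 1)} (hz : z ∈ invariants S S)
    (hu : u ∈ S) (hv : v ∈ S) (hi : i ∈ S) (hj : j ∈ S) (huv : u ≠ v) (hij : i ≠ j) (hiu : i ≠ u)
    (hiv : i ≠ v) (hju : j ≠ u) (hjv : j ≠ v) : residue i j (residue u v z) = 0 := by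
  set w := residue i j (residue u v z) with hw
  have hanti : w = -residue u v (residue i j z) := residue_residue_anticomm hiu hiv hju hjv z
  have hwuv : w ∈ supported (((S.erase v).erase u).erase j) :=
    residue_mem_supported (by simp [hiu, hiv, hi])
      (residue_mem_supported_of_mem_invariants hz hu hv)
  have hwij : w ∈ supported (((S.erase j).erase i).erase v) := by
    rw [hanti]
    exact neg_mem <| residue_mem_supported (by simp [hiu.symm, hju.symm, hu])
      (residue_mem_supported_of_mem_invariants hz hi hj)
  let σ := Equiv.swap u i * Equiv.swap v j
  have hσu : σ u = i := by simp [σ, Equiv.swap_apply_of_ne_of_ne huv hju.symm]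
  have hσv : σ v = j := by simp [σ, Equiv.swap_apply_of_ne_of_ne hju hij.symm]
  have hσi : σ i = u := by simp [σ, Equiv.swap_apply_of_ne_of_ne hiv hij]
  have hσj : σ j = v := by simp [σ, Equiv.swap_apply_of_ne_of_ne huv.symm hiv.symm]
  have hσ : ∀ l, l ≠ u → l ≠ v → l ≠ i → l ≠ j → σ l = l := fun l _ _ _ _ => by
    simp [σ, Equiv.swap_apply_of_ne_of_ne, *]
  have hfix : map σ w = w :=
    map_eq_self_of_mem_supported (fun l hl => by grind) (mem_supported_inter hwuv hwij)
  have hneg : map σ w = -w := by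
    rw [hanti, neg_neg, ← hanti, hw, map_residue_perm, map_residue_perm, hσi, hσj, hσu, hσv,
      mem_fixedBy.mp hz.2 σ fun l hl => by grind]
  exact self_eq_neg.mp (hfix.symm.trans hneg)

lemma residue_mem_bot_of_mem_invariants (hz : z ∈ invariants S S) (hu : u ∈ S) (hv : v ∈ S) :
    residue u v z ∈ (⊥ : Subalgebra ℚ (OS n)) := by
  rcases eq_or_ne u v with rfl | huv
  · rw [residue_self]; exact zero_mem _
  refine mem_bot_of_residue_eq_zero (residue_mem_supported_of_mem_invariants hz hu hv)
    fun i hi j hj => ?_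
  rcases eq_or_ne i j with rfl | hij
  · exact residue_self i _
  · simp only [mem_erase] at hi hj
    exact residue_residue_eq_zero_of_disjoint hz hu hv hi.2.2 hj.2.2 huv hij hi.1 hi.2.1 hj.1 hj.2.1

lemma residue_eq_residue_of_mem_invariants {i j : Fin (n + 1)} (hz : z ∈ invariants S S)
    (hu : u ∈ S) (hv : v ∈ S) (hi : i ∈ S) (hj : j ∈ S) (huv : u ≠ v) (hij : i ≠ j) :
    residue i j z = residue u v z := by
  let σ := Equiv.swap (Equiv.swap u i v) j * Equiv.swap u i
  have hσu : σ u = i := by simp [σ, Equiv.swap_apply_def]; grind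
  have hσv : σ v = j := by simp [σ]
  have hσ : ∀ l ∉ S, σ l = l := fun l hl => by simp [σ, Equiv.swap_apply_def]; grind
  obtain ⟨r, hr⟩ := Algebra.mem_bot.mp (residue_mem_bot_of_mem_invariants hz hu hv)
  calc residue i j z = map σ (residue u v z) := by
        rw [map_residue_perm, hσu, hσv, mem_fixedBy.mp hz.2 σ hσ]
    _ = residue u v z := by rw [← hr, AlgHom.commutes]

/-- The sum of the generators `e_{ij}` over the two-element subsets of `S`. -/
def edgeSum (S : Finset (Fin (n + 1))) : OS n := (1 / 2 : ℚ) • ∑ i ∈ S, ∑ j ∈ S, eOS n i j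

lemma edgeIndicator_eq_add (huv : u ≠ v) (i j : Fin (n + 1)) : edgeIndicator u v i j =
    (if u = i then if v = j then 1 else 0 else 0)
      + (if v = i then if u = j then 1 else 0 else 0) := by
  simp only [edgeIndicator, Sym2.eq_iff]; grind

lemma residue_edgeSum (hu : u ∈ S) (hv : v ∈ S) (huv : u ≠ v) : residue u v (edgeSum S) = 1 := by
  have : ∑ i ∈ S, ∑ j ∈ S, edgeIndicator u v i j = 2 := by
    simp only [edgeIndicator_eq_add huv, sum_add_distrib, ← ite_sum_zero, sum_ite_eq, hu, hv,
      if_true]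
    norm_num
  simp only [edgeSum, map_smul, map_sum, residue_eOS, ← sum_smul, this]
  module

lemma moved_subset {σ : Equiv.Perm (Fin (n + 1))} (hσ : ∀ i ∉ S, σ i = i) :
    {i | σ i ≠ i} ⊆ (S : Set (Fin (n + 1))) :=
  fun i hi => by_contra fun h => hi (hσ i h)

lemma edgeSum_mem_invariants (S : Finset (Fin (n + 1))) : edgeSum S ∈ invariants S S := by
  refine ⟨Subalgebra.smul_mem _ (sum_mem fun i hi => sum_mem fun j hj =>
    eOS_mem_supported hi hj) _, mem_fixedBy.mpr fun σ hσ => ?_⟩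
  have hσS := moved_subset hσ
  simp only [edgeSum, map_smul, map_sum, map_eOS]
  rw [σ.sum_comp S (fun i => ∑ j ∈ S, eOS n i (σ j)) hσS]
  simp only [fun i => σ.sum_comp S (fun j => eOS n i j) hσS]

lemma invariants_self_eq_span (S : Finset (Fin (n + 1))) :
    Subalgebra.toSubmodule (invariants S S) = Submodule.span ℚ {1, edgeSum S} := by
  refine le_antisymm (fun z hz => ?_) (Submodule.span_le.mpr ?_)
  · rw [Subalgebra.mem_toSubmodule] at hz
    by_cases hS : (S : Set (Fin (n + 1))).Subsingleton
    · have := hz.1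
      rw [supported_eq_bot hS] at this
      obtain ⟨r, rfl⟩ := Algebra.mem_bot.mp this
      rw [Algebra.algebraMap_eq_smul_one]
      exact Submodule.smul_mem _ r (Submodule.subset_span (by simp))
    obtain ⟨u, hu, v, hv, huv⟩ := Set.not_subsingleton_iff.mp hS
    obtain ⟨r, hr⟩ := Algebra.mem_bot.mp (residue_mem_bot_of_mem_invariants hz hu hv)
    have hres : ∀ i ∈ S, ∀ j ∈ S, residue i j (z - r • edgeSum S) = 0 := fun i hi j hj => by
      rcases eq_or_ne i j with rfl | hij
      · exact residue_self i _
      · rw [map_sub, map_smul, residue_edgeSum hi hj hij, ← Algebra.algebraMap_eq_smul_one, hr,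
          residue_eq_residue_of_mem_invariants hz hu hv hi hj huv hij, sub_self]
    obtain ⟨s, hs⟩ := Algebra.mem_bot.mp <| mem_bot_of_residue_eq_zero
      (sub_mem hz.1 (Subalgebra.smul_mem _ (edgeSum_mem_invariants S).1 r)) hres
    rw [Algebra.algebraMap_eq_smul_one] at hs
    exact Submodule.mem_span_pair.mpr ⟨s, r, by rw [hs, sub_add_cancel]⟩
  · rintro _ (rfl | rfl)
    · exact one_mem (invariants S S)
    · exact edgeSum_mem_invariants S

end Invariants

section Elements

variable {n : ℕ} {S T : Finset (Fin (n + 1))} {r u : Fin (n + 1)}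

/-- The sum of the generators `e_{ir}` over `i ∈ S`. -/
def starSum (S : Finset (Fin (n + 1))) (r : Fin (n + 1)) : OS n := ∑ i ∈ S, eOS n i r

/-- The sum of the products `e_{ij} e_{ir}` over ordered pairs of elements of `S`. -/
def hookSum (S : Finset (Fin (n + 1))) (r : Fin (n + 1)) : OS n :=
  ∑ i ∈ S, ∑ j ∈ S, eOS n i j * eOS n i r

lemma eOS_mem_OSdeg_one (i j : Fin (n + 1)) : eOS n i j ∈ OSdeg n 1 := by
  rw [OSdeg, pow_one]
  rcases eq_or_ne i j with rfl | h
  · rw [eOS_self]; exact zero_mem _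
  · rw [eOS_of_ne h]; exact Submodule.mem_map_of_mem (LinearMap.mem_range_self _ _)

lemma mul_self_of_mem_OSdeg_one {x : OS n} (hx : x ∈ OSdeg n 1) : x * x = 0 := by
  rw [OSdeg, pow_one] at hx
  obtain ⟨_, ⟨v, rfl⟩, rfl⟩ := hx
  rw [AlgHom.toLinearMap_apply, ← map_mul, ExteriorAlgebra.ι_sq_zero, map_zero]

lemma edgeSum_mem_OSdeg_one (S : Finset (Fin (n + 1))) : edgeSum S ∈ OSdeg n 1 :=
  Submodule.smul_mem _ _ <| sum_mem fun i _ => sum_mem fun j _ => eOS_mem_OSdeg_one i j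

lemma starSum_mem_OSdeg_one (S : Finset (Fin (n + 1))) (r : Fin (n + 1)) :
    starSum S r ∈ OSdeg n 1 :=
  sum_mem fun i _ => eOS_mem_OSdeg_one i r

lemma edgeSum_mul_self (S : Finset (Fin (n + 1))) : edgeSum S * edgeSum S = 0 :=
  mul_self_of_mem_OSdeg_one (edgeSum_mem_OSdeg_one S)

lemma starSum_mul_self (S : Finset (Fin (n + 1))) (r : Fin (n + 1)) :
    starSum S r * starSum S r = 0 :=
  mul_self_of_mem_OSdeg_one (starSum_mem_OSdeg_one S r)

lemma commute_eOS_mul_eOS (i j k l : Fin (n + 1)) (z : OS n) :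
    Commute (eOS n i j * eOS n k l) z := by
  induction z using OS.induction with
  | eOS s t =>
    rw [commute_iff_eq, mul_assoc, eOS_mul_swap k l, mul_neg, ← mul_assoc, eOS_mul_swap i j,
      neg_mul, neg_neg, mul_assoc]
  | algebraMap q => exact (Algebra.commutes q _).symm
  | add x y hx hy => exact hx.add_right hy
  | mul x y hx hy => exact hx.mul_right hy

lemma commute_hookSum (S : Finset (Fin (n + 1))) (r : Fin (n + 1)) (z : OS n) :
    Commute (hookSum S r) z :=
  Commute.sum_left _ _ _ fun _ _ => Commute.sum_left _ _ _ fun _ _ => commute_eOS_mul_eOS _ _ _ _ z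

lemma parity_hookSum (S : Finset (Fin (n + 1))) (r : Fin (n + 1)) :
    parity (hookSum S r) = hookSum S r := by
  simp [hookSum]

lemma invariants_mono (h : S ⊆ T) {W : Finset (Fin (n + 1))} : invariants S W ≤ invariants T W :=
  inf_le_inf_right _ (supported_mono h)

lemma starSum_mem_invariants (hr : r ∉ S) : starSum S r ∈ invariants (insert r S) S := by
  refine ⟨sum_mem fun i hi => eOS_mem_supported (mem_insert_of_mem hi) (mem_insert_self r S),
    mem_fixedBy.mpr fun σ hσ => ?_⟩
  simp only [starSum, map_sum, map_eOS, hσ r hr]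
  exact σ.sum_comp S (fun i => eOS n i r) (moved_subset hσ)

lemma hookSum_mem_invariants (hr : r ∉ S) : hookSum S r ∈ invariants (insert r S) S := by
  refine ⟨sum_mem fun i hi => sum_mem fun j hj => mul_mem
    (eOS_mem_supported (mem_insert_of_mem hi) (mem_insert_of_mem hj))
    (eOS_mem_supported (mem_insert_of_mem hi) (mem_insert_self r S)),
    mem_fixedBy.mpr fun σ hσ => ?_⟩
  simp only [hookSum, map_sum, map_mul, map_eOS, hσ r hr]
  rw [σ.sum_comp S (fun i => ∑ j ∈ S, eOS n i (σ j) * eOS n i r) (moved_subset hσ)]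
  simp only [fun i => σ.sum_comp S (fun j => eOS n i j * eOS n i r) (moved_subset hσ)]

lemma proj_starSum (hr : r ∉ S) : proj S (starSum S r) = 0 := by
  simp [starSum, proj_eOS, hr]

lemma proj_hookSum (hr : r ∉ S) : proj S (hookSum S r) = 0 := by
  simp [hookSum, proj_eOS, hr]

lemma edgeSum_insert (hu : u ∉ S) : edgeSum (insert u S) = edgeSum S + starSum S u := by
  have : ∑ i ∈ S, eOS n u i = ∑ i ∈ S, eOS n i u := sum_congr rfl fun i _ => eOS_comm _ _
  simp only [edgeSum, starSum, sum_insert hu, eOS_self, zero_add, sum_add_distrib, this]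
  module

end Elements

section ResidueFormulas

variable {n : ℕ} {S : Finset (Fin (n + 1))} {r u : Fin (n + 1)}

lemma merge_of_mem (hr : r ∉ S) (u : Fin (n + 1)) {i : Fin (n + 1)} (hi : i ∈ S) :
    merge u r i = i :=
  merge_of_ne u fun h => hr (h ▸ hi)

lemma edgeIndicator_right (hur : u ≠ r) (i : Fin (n + 1)) :
    edgeIndicator u r i r = if i = u then 1 else 0 := by
  simp only [edgeIndicator, Sym2.eq_iff]; grind

lemma map_merge_edgeSum (hr : r ∉ S) : map (merge u r) (edgeSum S) = edgeSum S :=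
  map_eq_self_of_mem_supported (fun _ => merge_of_mem hr u) (edgeSum_mem_invariants S).1

lemma residue_edgeSum_eq_zero (hr : r ∉ S) : residue u r (edgeSum S) = 0 :=
  residue_eq_zero (.inr hr) (edgeSum_mem_invariants S).1

lemma map_merge_starSum (hu : u ∉ S) (hr : r ∉ insert u S) :
    map (merge u r) (starSum (insert u S) r) = starSum S u := by
  simp only [starSum, map_sum, map_eOS]
  rw [sum_congr rfl fun i hi => by rw [merge_of_mem hr u hi]]
  simp [sum_insert hu]

lemma map_merge_hookSum (hu : u ∉ S) (hr : r ∉ insert u S) :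
    map (merge u r) (hookSum (insert u S) r) = hookSum S u := by
  simp only [hookSum, map_sum, map_mul, map_eOS]
  rw [sum_congr rfl fun i hi => sum_congr rfl fun j hj => by
    rw [merge_of_mem hr u hi, merge_of_mem hr u hj]]
  simp [sum_insert hu]

lemma residue_starSum (hur : u ≠ r) (hu : u ∈ S) : residue u r (starSum S r) = 1 := by
  simp [starSum, residue_eOS, edgeIndicator_right hur, hu]

lemma residue_hookSum (hu : u ∉ S) (hr : r ∉ insert u S) :
    residue u r (hookSum (insert u S) r) = starSum S u := by
  have hur : u ≠ r := fun h => hr (h ▸ mem_insert_self u S)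
  have hres : ∀ i ∈ insert u S, ∀ j ∈ insert u S, residue u r (eOS n i j * eOS n i r) =
      if i = u then eOS n j i else 0 := fun i hi j hj => by
    rw [residue_mul, residue_eq_zero (.inr hr) (eOS_mem_supported hi hj), zero_mul, add_zero,
      residue_eOS, edgeIndicator_right hur, map_eOS, merge_of_mem hr u hi, merge_of_mem hr u hj,
      eOS_comm i j]
    split_ifs <;> simp
  simp only [hookSum, map_sum]
  rw [sum_congr rfl fun i hi => sum_congr rfl fun j hj => hres i hi j hj]
  rw [sum_eq_single_of_mem u (mem_insert_self u S) fun i _ hi => by simp [hi]]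
  simp [sum_insert hu, starSum]

lemma residue_hookSum_pow_succ (hu : u ∉ S) (hr : r ∉ insert u S) (d : ℕ) :
    residue u r (hookSum (insert u S) r ^ (d + 1)) =
      (d + 1 : ℚ) • (starSum S u * hookSum S u ^ d) := by
  induction d with
  | zero => simp [residue_hookSum hu hr]
  | succ d ih =>
    rw [pow_succ, residue_mul, ih, map_pow, map_merge_hookSum hu hr, residue_hookSum hu hr,
      parity_hookSum, ((commute_hookSum S u (starSum S u)).pow_left _).eq, smul_mul_assoc,
      mul_assoc, ← pow_succ]
    push_cast; module

lemma residue_starSum_mul_hookSum_pow (hu : u ∉ S) (hr : r ∉ insert u S) (d : ℕ) :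
    residue u r (starSum (insert u S) r * hookSum (insert u S) r ^ d) = hookSum S u ^ d := by
  have hur : u ≠ r := fun h => hr (h ▸ mem_insert_self u S)
  have hzero : starSum S u * residue u r (hookSum (insert u S) r ^ d) = 0 := by
    cases d with
    | zero => simp
    | succ d =>
      rw [residue_hookSum_pow_succ hu hr, mul_smul_comm, ← mul_assoc, starSum_mul_self, zero_mul,
        smul_zero]
  rw [residue_mul, map_merge_starSum hu hr, hzero, zero_add,
    residue_starSum hur (mem_insert_self u S), one_mul, map_pow, map_pow, map_merge_hookSum hu hr,
    parity_hookSum]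

lemma residue_edgeSum_mul_hookSum_pow_succ (hu : u ∉ S) (hr : r ∉ insert u S) (d : ℕ) :
    residue u r (edgeSum (insert u S) * hookSum (insert u S) r ^ (d + 1)) =
      (d + 1 : ℚ) • (edgeSum S * starSum S u * hookSum S u ^ d) := by
  rw [residue_mul, residue_edgeSum_eq_zero hr, zero_mul, add_zero, map_merge_edgeSum hr,
    residue_hookSum_pow_succ hu hr, edgeSum_insert hu, mul_smul_comm, ← mul_assoc, add_mul,
    starSum_mul_self, add_zero]

lemma residue_edgeSum_mul_starSum_mul_hookSum_pow (hu : u ∉ S) (hr : r ∉ insert u S) (d : ℕ) :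
    residue u r (edgeSum (insert u S) * starSum (insert u S) r * hookSum (insert u S) r ^ d) =
      (edgeSum S + starSum S u) * hookSum S u ^ d := by
  rw [mul_assoc, residue_mul, residue_edgeSum_eq_zero hr, zero_mul, add_zero,
    map_merge_edgeSum hr, residue_starSum_mul_hookSum_pow hu hr, edgeSum_insert hu]

end ResidueFormulas

section Restriction

variable {n : ℕ} {S : Finset (Fin (n + 1))} {r u : Fin (n + 1)} {x y z : OS n}

lemma residue_mem_invariants (hu : u ∉ S) (hr : r ∉ insert u S)
    (hz : z ∈ invariants (insert r (insert u S)) (insert u S)) :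
    residue u r z ∈ invariants (insert u S) S := by
  refine ⟨?_, mem_fixedBy.mpr fun σ hσ => ?_⟩
  · simpa [erase_insert hr] using residue_mem_supported (v := r) (by simp) hz.1
  · have hσu : σ u = u := hσ u hu
    have hσr : σ r = r := hσ r fun h => hr (mem_insert_of_mem h)
    rw [map_residue_perm, hσu, hσr,
      mem_fixedBy.mp hz.2 σ fun i hi => hσ i fun h => hi (mem_insert_of_mem h)]

lemma mem_invariants_self_of_residue_eq_zero (hu : u ∈ S) (hr : r ∉ S)
    (hz : z ∈ invariants (insert r S) S) (h : residue u r z = 0) : z ∈ invariants S S := by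
  refine ⟨?_, hz.2⟩
  rw [← erase_insert hr]
  refine mem_supported_erase hz.1 fun i hi => ?_
  rcases mem_insert.mp hi with rfl | hi
  · exact residue_self i z
  · have : map (Equiv.swap u i) (residue u r z) = residue i r z := by
      rw [map_residue_perm, map_swap_of_mem_fixedBy hz.2 hu hi, Equiv.swap_apply_left,
        swap_apply_of_notMem hu hi hr]
    rw [← this, h, map_zero]

lemma eq_of_residue_eq_of_proj_eq (hu : u ∈ S) (hr : r ∉ S) (hx : x ∈ invariants (insert r S) S)
    (hy : y ∈ invariants (insert r S) S) (hres : residue u r x = residue u r y)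
    (hproj : proj S x = proj S y) : x = y := by
  have hmem : x - y ∈ invariants S S :=
    mem_invariants_self_of_residue_eq_zero hu hr (sub_mem hx hy) (by rw [map_sub, hres, sub_self])
  rw [← sub_eq_zero, ← proj_eq_self_of_mem_supported hmem.1, map_sub, hproj, sub_self]

end Restriction

section Relations

variable {n : ℕ} {S : Finset (Fin (n + 1))} {r : Fin (n + 1)}

lemma edgeSum_mem_invariants_insert (S : Finset (Fin (n + 1))) (r : Fin (n + 1)) :
    edgeSum S ∈ invariants (insert r S) S :=
  invariants_mono (subset_insert r S) (edgeSum_mem_invariants S)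

lemma starSum_mul_hookSum_pow_mem_invariants (hr : r ∉ S) (d : ℕ) :
    starSum S r * hookSum S r ^ d ∈ invariants (insert r S) S :=
  mul_mem (starSum_mem_invariants hr) (pow_mem (hookSum_mem_invariants hr) d)

lemma edgeSum_of_subsingleton (hS : (S : Set (Fin (n + 1))).Subsingleton) : edgeSum S = 0 := by
  rw [edgeSum, sum_eq_zero fun i hi => sum_eq_zero fun j hj => by rw [hS hi hj, eOS_self],
    smul_zero]

mutual

theorem edgeSum_mul_hookSum_pow : ∀ (q : ℕ) (S : Finset (Fin (n + 1))) (r : Fin (n + 1)),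
    r ∉ S → #S = 2 * q + 1 →
    edgeSum S * hookSum S r ^ q = (q : ℚ) • (starSum S r * hookSum S r ^ q)
  | 0, S, r, _, hS => by
    obtain ⟨i, rfl⟩ := card_eq_one.mp hS
    simp [edgeSum_of_subsingleton]
  | q + 1, S', r, hr, hS => by
    obtain ⟨u, S, hu, rfl, hS⟩ := card_eq_succ.mp hS
    refine eq_of_residue_eq_of_proj_eq (mem_insert_self u S) hr
      (mul_mem (edgeSum_mem_invariants_insert _ r) (pow_mem (hookSum_mem_invariants hr) _))
      (Subalgebra.smul_mem _ (starSum_mul_hookSum_pow_mem_invariants hr _) _) ?_ ?_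
    · rw [residue_edgeSum_mul_hookSum_pow_succ hu hr, map_smul,
        residue_starSum_mul_hookSum_pow hu hr, hookSum_pow_succ q S u hu (by lia)]
      push_cast; rfl
    · simp [proj_hookSum hr]

theorem hookSum_pow_succ : ∀ (q : ℕ) (S : Finset (Fin (n + 1))) (r : Fin (n + 1)),
    r ∉ S → #S = 2 * q + 2 →
    hookSum S r ^ (q + 1) = edgeSum S * starSum S r * hookSum S r ^ q
  | q, S', r, hr, hS => by
    obtain ⟨u, S, hu, rfl, hS⟩ := card_eq_succ.mp hS
    refine eq_of_residue_eq_of_proj_eq (mem_insert_self u S) hr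
      (pow_mem (hookSum_mem_invariants hr) _) ?_ ?_ ?_
    · rw [mul_assoc]
      exact mul_mem (edgeSum_mem_invariants_insert _ r)
        (starSum_mul_hookSum_pow_mem_invariants hr _)
    · rw [residue_hookSum_pow_succ hu hr, residue_edgeSum_mul_starSum_mul_hookSum_pow hu hr,
        add_mul, edgeSum_mul_hookSum_pow q S u hu (by lia)]
      module
    · simp [proj_hookSum hr, proj_starSum hr]

end

lemma hookSum_pow_succ_eq_zero {q : ℕ} (hr : r ∉ S) (hS : #S = 2 * q + 1) :
    hookSum S r ^ (q + 1) = 0 := by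
  obtain ⟨u, S, hu, rfl, hcard⟩ := card_eq_succ.mp hS
  refine eq_of_residue_eq_of_proj_eq (mem_insert_self u S) hr
    (pow_mem (hookSum_mem_invariants hr) _) (zero_mem _) ?_ (by simp [proj_hookSum hr])
  have hzero : starSum S u * hookSum S u ^ q = 0 := by
    cases q with
    | zero => simp [starSum, card_eq_zero.mp hcard]
    | succ q =>
      rw [← ((commute_hookSum S u _).pow_left _).eq, hookSum_pow_succ q S u hu hcard,
        mul_assoc, ((commute_hookSum S u _).pow_left _).eq, mul_assoc, ← mul_assoc (starSum S u),
        starSum_mul_self, zero_mul, mul_zero]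
  rw [residue_hookSum_pow_succ hu hr, hzero, smul_zero, map_zero]

lemma edgeSum_mul_starSum (S : Finset (Fin (n + 1))) (r : Fin (n + 1)) :
    edgeSum S * starSum S r = -(starSum S r * edgeSum S) := by
  have hmem : edgeSum S + starSum S r ∈ OSdeg n 1 :=
    add_mem (edgeSum_mem_OSdeg_one S) (starSum_mem_OSdeg_one S r)
  have hsq := mul_self_of_mem_OSdeg_one hmem
  rw [add_mul, mul_add, mul_add, edgeSum_mul_self, starSum_mul_self, zero_add, add_zero] at hsq
  exact eq_neg_of_add_eq_zero_left hsq

end Relations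

section StandardMonomials

variable {A : Type*} [Ring A] {a m c : A} {q : ℕ}

/-- The monomials `a ^ ε * m ^ δ * c ^ d` with `ε, δ ∈ {0, 1}` and `d ∈ I`. -/
def standardMonomials (a m c : A) (I : Set ℕ) : Set A :=
  {x | ∃ ε ∈ ({0, 1} : Set ℕ), ∃ δ ∈ ({0, 1} : Set ℕ), ∃ d ∈ I, x = a ^ ε * m ^ δ * c ^ d}

/-- The claimed basis of the invariants of the symmetric group on `k` letters. -/
def candidateBasis (k : ℕ) (a m c : A) : Set A :=
  if Even k then standardMonomials a m c (Set.Iio ((k + 1) / 2))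
  else standardMonomials a m c (Set.Iio ((k + 1) / 2 - 1)) ∪
    {c ^ ((k + 1) / 2 - 1), a * c ^ ((k + 1) / 2 - 1) + m * c ^ ((k + 1) / 2 - 1)}

lemma standardMonomials_eq_union (a m c : A) (I : Set ℕ) :
    standardMonomials a m c I = (fun d => c ^ d) '' I ∪ (fun d => m * c ^ d) '' I ∪
      (fun d => a * c ^ d) '' I ∪ (fun d => a * m * c ^ d) '' I := by
  ext x
  simp [standardMonomials, eq_comm, or_assoc]

lemma standardMonomials_subset_iff {I : Set ℕ} {W : Set A} :
    standardMonomials a m c I ⊆ W ↔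
      ∀ d ∈ I, c ^ d ∈ W ∧ m * c ^ d ∈ W ∧ a * c ^ d ∈ W ∧ a * m * c ^ d ∈ W := by
  simp only [standardMonomials_eq_union, Set.union_subset_iff, Set.image_subset_iff]
  exact ⟨fun h d hd => ⟨h.1.1.1 hd, h.1.1.2 hd, h.1.2 hd, h.2 hd⟩, fun h =>
    ⟨⟨⟨fun d hd => (h d hd).1, fun d hd => (h d hd).2.1⟩, fun d hd => (h d hd).2.2.1⟩,
      fun d hd => (h d hd).2.2.2⟩⟩

lemma finite_standardMonomials {I : Set ℕ} (hI : I.Finite) :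
    (standardMonomials a m c I).Finite := by
  rw [standardMonomials_eq_union]
  exact (((hI.image _).union (hI.image _)).union (hI.image _)).union (hI.image _)

lemma ncard_standardMonomials_le {I : Set ℕ} (hI : I.Finite) :
    (standardMonomials a m c I).ncard ≤ 4 * I.ncard := by
  rw [standardMonomials_eq_union]
  have := Set.ncard_image_le (f := fun d => c ^ d) hI
  have := Set.ncard_image_le (f := fun d => m * c ^ d) hI
  have := Set.ncard_image_le (f := fun d => a * c ^ d) hI
  have := Set.ncard_image_le (f := fun d => a * m * c ^ d) hI
  grw [Set.ncard_union_le, Set.ncard_union_le, Set.ncard_union_le]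
  lia

lemma candidateBasis_even (a m c : A) (q : ℕ) :
    candidateBasis (2 * q + 2) a m c = standardMonomials a m c (Set.Iio (q + 1)) := by
  rw [candidateBasis, if_pos (by grind), show (2 * q + 2 + 1) / 2 = q + 1 by lia]

lemma candidateBasis_odd (a m c : A) (q : ℕ) : candidateBasis (2 * q + 1) a m c =
    standardMonomials a m c (Set.Iio q) ∪ {c ^ q, a * c ^ q + m * c ^ q} := by
  rw [candidateBasis, if_neg (by grind), show (2 * q + 1 + 1) / 2 - 1 = q by lia]

lemma finite_candidateBasis (k : ℕ) (a m c : A) : (candidateBasis k a m c).Finite := by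
  unfold candidateBasis
  split_ifs
  · exact finite_standardMonomials (Set.finite_Iio _)
  · exact (finite_standardMonomials (Set.finite_Iio _)).union (Set.toFinite _)

lemma ncard_candidateBasis_le (k : ℕ) (a m c : A) : (candidateBasis k a m c).ncard ≤ 2 * k := by
  have hstd (q : ℕ) := ncard_standardMonomials_le (a := a) (m := m) (c := c) (Set.finite_Iio q)
  simp only [Set.ncard_Iio_nat] at hstd
  unfold candidateBasis
  split_ifs with hk
  · grw [hstd]; grind
  · grw [Set.ncard_union_le, hstd, Set.ncard_insert_le, Set.ncard_singleton]; grind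

variable [Algebra ℚ A]

lemma standardMonomials_univ_subset_span_of_even (ha : a * a = 0) (hm : m * m = 0)
    (hc : ∀ z, Commute c z) (h : c ^ (q + 1) = a * m * c ^ q) :
    standardMonomials a m c Set.univ ⊆
      Submodule.span ℚ (standardMonomials a m c (Set.Iio (q + 1))) := by
  have hstd := standardMonomials_subset_iff.mp
    (Submodule.subset_span (R := ℚ) (s := standardMonomials a m c (Set.Iio (q + 1))))
  have ha' : a * c ^ (q + 1) = 0 := by rw [h, ← mul_assoc, ← mul_assoc, ha, zero_mul, zero_mul]
  have hm' : m * c ^ (q + 1) = 0 := by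
    rw [← ((hc m).pow_left _).eq, h, mul_assoc, ((hc m).pow_left _).eq, mul_assoc, ← mul_assoc m,
      hm, zero_mul, mul_zero]
  have hc' : c ^ (q + 2) = 0 := by
    rw [pow_succ, h, mul_assoc, ← pow_succ, mul_assoc, hm', mul_zero]
  refine standardMonomials_subset_iff.mpr fun d _ => ?_
  rcases lt_trichotomy d (q + 1) with hd | rfl | hd
  · exact hstd d hd
  · rw [ha', hm', mul_assoc a, hm', mul_zero, h]
    exact ⟨(hstd q (Nat.lt_succ_self q)).2.2.2, zero_mem _, zero_mem _, zero_mem _⟩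
  · simp [pow_eq_zero_of_le hd hc']

lemma standardMonomials_univ_subset_span_of_odd (hm : m * m = 0) (ham : a * m = -(m * a))
    (h : a * c ^ q = (q : ℚ) • (m * c ^ q)) (hc : c ^ (q + 1) = 0) :
    standardMonomials a m c Set.univ ⊆ Submodule.span ℚ
      (standardMonomials a m c (Set.Iio q) ∪ {c ^ q, a * c ^ q + m * c ^ q}) := by
  set W := Submodule.span ℚ (standardMonomials a m c (Set.Iio q) ∪ {c ^ q, a * c ^ q + m * c ^ q})
    with hW
  have hstd := standardMonomials_subset_iff.mp
    (Set.subset_union_left.trans (Submodule.subset_span (R := ℚ)) : _ ⊆ (W : Set A))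
  have hsum : a * c ^ q + m * c ^ q ∈ W := Submodule.subset_span (by simp)
  have hmc : m * c ^ q ∈ W := by
    have : m * c ^ q = (1 / (q + 1) : ℚ) • (a * c ^ q + m * c ^ q) := by
      have : (q + 1 : ℚ) ≠ 0 := by positivity
      rw [h]; match_scalars; field_simp
    rw [this]; exact Submodule.smul_mem _ _ hsum
  have hamc : a * m * c ^ q = 0 := by
    rw [ham, neg_mul, mul_assoc, h, mul_smul_comm, ← mul_assoc, hm, zero_mul, smul_zero, neg_zero]
  refine standardMonomials_subset_iff.mpr fun d _ => ?_
  rcases lt_trichotomy d q with hd | rfl | hd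
  · exact hstd d hd
  · rw [hamc, h]
    exact ⟨Submodule.subset_span (by simp), hmc, Submodule.smul_mem _ _ hmc, zero_mem _⟩
  · simp [pow_eq_zero_of_le hd hc]

end StandardMonomials

section Basis

variable {n : ℕ} {S : Finset (Fin (n + 1))} {r u : Fin (n + 1)}

lemma standardMonomials_subset_invariants (hr : r ∉ S) (I : Set ℕ) :
    standardMonomials (edgeSum S) (starSum S r) (hookSum S r) I ⊆ invariants (insert r S) S := by
  have ha := edgeSum_mem_invariants_insert S r
  have hm := starSum_mem_invariants hr
  have hc := pow_mem (hookSum_mem_invariants hr)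
  exact standardMonomials_subset_iff.mpr fun d _ =>
    ⟨hc d, mul_mem hm (hc d), mul_mem ha (hc d), mul_mem (mul_mem ha hm) (hc d)⟩

lemma standardMonomials_subset_map_residue (hu : u ∉ S) (hr : r ∉ insert u S) :
    standardMonomials (edgeSum S) (starSum S u) (hookSum S u) Set.univ ⊆
      (Submodule.span ℚ (standardMonomials (edgeSum (insert u S)) (starSum (insert u S) r)
        (hookSum (insert u S) r) Set.univ)).map (residue u r) := by
  set W := Submodule.span ℚ (standardMonomials (edgeSum (insert u S)) (starSum (insert u S) r)
    (hookSum (insert u S) r) Set.univ)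
  have hstd := standardMonomials_subset_iff.mp
    (show _ ⊆ (W : Set (OS n)) from Submodule.subset_span)
  have hscale {d : ℕ} {x : OS n} (hx : (d + 1 : ℚ) • x ∈ W.map (residue u r)) :
      x ∈ W.map (residue u r) :=
    (Submodule.smul_mem_iff _ (by positivity)).mp hx
  refine standardMonomials_subset_iff.mpr fun d _ => ?_
  have hc : hookSum S u ^ d ∈ W.map (residue u r) := by
    rw [← residue_starSum_mul_hookSum_pow hu hr]
    exact Submodule.mem_map_of_mem (hstd d trivial).2.1
  have hmc : starSum S u * hookSum S u ^ d ∈ W.map (residue u r) := hscale <| by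
    rw [← residue_hookSum_pow_succ hu hr]
    exact Submodule.mem_map_of_mem (hstd (d + 1) trivial).1
  refine ⟨hc, hmc, (Submodule.add_mem_iff_left _ hmc).mp ?_, hscale (d := d) ?_⟩
  · rw [← add_mul, ← residue_edgeSum_mul_starSum_mul_hookSum_pow hu hr]
    exact Submodule.mem_map_of_mem (hstd d trivial).2.2.2
  · rw [← residue_edgeSum_mul_hookSum_pow_succ hu hr]
    exact Submodule.mem_map_of_mem (hstd (d + 1) trivial).2.2.1

lemma invariants_eq_bot {T : Finset (Fin (n + 1))} (hT : (T : Set (Fin (n + 1))).Subsingleton)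
    (S : Finset (Fin (n + 1))) : invariants T S = ⊥ :=
  eq_bot_iff.mpr (inf_le_left.trans (supported_eq_bot hT).le)

lemma span_standardMonomials (hr : r ∉ S) :
    Submodule.span ℚ (standardMonomials (edgeSum S) (starSum S r) (hookSum S r) Set.univ) =
      Subalgebra.toSubmodule (invariants (insert r S) S) := by
  refine le_antisymm (Submodule.span_le.mpr (standardMonomials_subset_invariants hr _)) ?_
  induction S using Finset.induction_on generalizing r with
  | empty =>
    rw [invariants_eq_bot (by simp), Algebra.toSubmodule_bot, Submodule.one_eq_span,
      Submodule.span_singleton_le_iff_mem]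
    exact Submodule.subset_span ⟨0, by simp, 0, by simp, 0, trivial, by simp⟩
  | insert u S hu ih =>
    intro z hz
    have hres := ih hu (residue_mem_invariants hu hr hz)
    obtain ⟨w, hw, hwz⟩ :=
      Submodule.span_le.mpr (standardMonomials_subset_map_residue hu hr) hres
    have hw' : w ∈ Subalgebra.toSubmodule (invariants (insert r (insert u S)) (insert u S)) :=
      Submodule.span_le.mpr (standardMonomials_subset_invariants hr _) hw
    have hker : z - w ∈ Subalgebra.toSubmodule (invariants (insert u S) (insert u S)) :=
      mem_invariants_self_of_residue_eq_zero (mem_insert_self u S) hr (sub_mem hz hw')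
        (by rw [map_sub, hwz, sub_self])
    rw [invariants_self_eq_span] at hker
    rw [← sub_add_cancel z w]
    refine add_mem (Submodule.span_mono ?_ hker) hw
    rintro _ (rfl | rfl)
    · exact ⟨0, by simp, 0, by simp, 0, trivial, by simp⟩
    · exact ⟨1, by simp, 0, by simp, 0, trivial, by simp⟩

lemma candidateBasis_subset_span_standardMonomials (k : ℕ) {A : Type*} [Ring A] [Algebra ℚ A]
    (a m c : A) :
    candidateBasis k a m c ⊆ Submodule.span ℚ (standardMonomials a m c Set.univ) := by
  have hstd := standardMonomials_subset_iff.mp (Submodule.subset_span (R := ℚ) :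
    standardMonomials a m c Set.univ ⊆ Submodule.span ℚ (standardMonomials a m c Set.univ))
  unfold candidateBasis
  split_ifs
  · exact standardMonomials_subset_iff.mpr fun d _ => hstd d trivial
  · refine Set.union_subset (standardMonomials_subset_iff.mpr fun d _ => hstd d trivial) ?_
    rintro _ (rfl | rfl)
    · exact (hstd _ trivial).1
    · exact add_mem (hstd _ trivial).2.2.1 (hstd _ trivial).2.1

lemma span_candidateBasis (hS : S.Nonempty) (hr : r ∉ S) :
    Submodule.span ℚ (candidateBasis #S (edgeSum S) (starSum S r) (hookSum S r)) =
      Subalgebra.toSubmodule (invariants (insert r S) S) := by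
  rw [← span_standardMonomials hr]
  refine le_antisymm (Submodule.span_le.mpr (candidateBasis_subset_span_standardMonomials _ _ _ _))
    (Submodule.span_le.mpr ?_)
  rcases Nat.even_or_odd' #S with ⟨q, hq | hq⟩
  · obtain ⟨q, rfl⟩ := Nat.exists_eq_add_one.mpr (show 0 < q by have := hS.card_pos; lia)
    rw [hq, mul_add, candidateBasis_even]
    exact standardMonomials_univ_subset_span_of_even (edgeSum_mul_self S) (starSum_mul_self S r)
      (commute_hookSum S r) (hookSum_pow_succ q S r hr hq)
  · rw [hq, candidateBasis_odd]
    exact standardMonomials_univ_subset_span_of_odd (starSum_mul_self S r) (edgeSum_mul_starSum S r)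
      (edgeSum_mul_hookSum_pow q S r hr hq) (hookSum_pow_succ_eq_zero hr hq)

lemma finrank_invariants_self (hS : 1 < #S) : Module.finrank ℚ (invariants S S) = 2 := by
  obtain ⟨u, hu, v, hv, huv⟩ := one_lt_card.mp hS
  have hli : LinearIndependent ℚ ![1, edgeSum S] := by
    refine LinearIndependent.pair_iff.mpr fun s t h => ?_
    have ht : t = 0 := by
      simpa [residue_one, residue_edgeSum hu hv huv] using congrArg (residue u v) h
    exact ⟨by simpa [ht] using h, ht⟩
  rw [← Subalgebra.finrank_toSubmodule, invariants_self_eq_span, ← Matrix.range_cons_cons_empty,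
    finrank_span_eq_card hli, Fintype.card_fin]

lemma map_residue_invariants (hu : u ∉ S) (hr : r ∉ insert u S) :
    (Subalgebra.toSubmodule (invariants (insert r (insert u S)) (insert u S))).map (residue u r) =
      Subalgebra.toSubmodule (invariants (insert u S) S) := by
  refine le_antisymm (Submodule.map_le_iff_le_comap.mpr fun z => residue_mem_invariants hu hr) ?_
  rw [← span_standardMonomials hu, ← span_standardMonomials hr]
  exact Submodule.span_le.mpr (standardMonomials_subset_map_residue hu hr)

/-- Rank–nullity for the residue along `x_u = x_r`. -/
lemma finrank_invariants_insert (hu : u ∉ S) (hr : r ∉ insert u S) :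
    Module.finrank ℚ (invariants (insert r (insert u S)) (insert u S)) =
      Module.finrank ℚ (invariants (insert u S) S) +
        Module.finrank ℚ (invariants (insert u S) (insert u S)) := by
  set V := Subalgebra.toSubmodule (invariants (insert r (insert u S)) (insert u S)) with hV
  set K := Subalgebra.toSubmodule (invariants (insert u S) (insert u S))
  have hfin : Module.Finite ℚ V := by
    rw [hV, ← span_candidateBasis (insert_nonempty u S) hr]
    exact FiniteDimensional.span_of_finite ℚ (finite_candidateBasis _ _ _ _)
  have hker : LinearMap.ker ((residue u r).domRestrict V) = K.comap V.subtype := by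
    ext ⟨x, hx⟩
    exact ⟨mem_invariants_self_of_residue_eq_zero (mem_insert_self u S) hr hx,
      fun h => residue_eq_zero (.inr hr) h.1⟩
  have hKV : K ≤ V := invariants_mono (subset_insert _ _)
  have hrank := ((residue u r).domRestrict V).finrank_range_add_finrank_ker
  rw [hker, (Submodule.comapSubtypeEquivOfLe hKV).finrank_eq, LinearMap.range_domRestrict, hV,
    map_residue_invariants hu hr] at hrank
  exact hrank.symm

lemma finrank_invariants (hS : S.Nonempty) (hr : r ∉ S) :
    Module.finrank ℚ (invariants (insert r S) S) = 2 * #S := by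
  induction hS using Finset.Nonempty.cons_induction generalizing r with
  | singleton u =>
    rw [← insert_empty_eq u, finrank_invariants_insert (notMem_empty u) hr,
      invariants_eq_bot (by simp), invariants_eq_bot (by simp), Subalgebra.finrank_bot]
    rfl
  | cons u S hu hS ih =>
    rw [cons_eq_insert] at hr ⊢
    have : 0 < #S := hS.card_pos
    rw [finrank_invariants_insert hu hr, ih hu, card_insert_of_notMem hu,
      finrank_invariants_self (by rw [card_insert_of_notMem hu]; lia), mul_add]

end Basis

section Translation

variable {n : ℕ}

lemma sum_sum_eq_sum_filter_lt {ι M : Type*} [Fintype ι] [LinearOrder ι] [AddCommMonoid M]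
    (g : ι → ι → M) (hg : ∀ i, g i i = 0) :
    ∑ i, ∑ j, g i j = ∑ p : ι × ι with p.1 < p.2, (g p.1 p.2 + g p.2 p.1) := by
  have hswap : ∑ p : ι × ι with p.2 < p.1, g p.1 p.2 = ∑ p : ι × ι with p.1 < p.2, g p.2 p.1 :=
    sum_equiv (Equiv.prodComm ι ι) (by simp) (by simp)
  have hsplit : ∀ i j, g i j = (if i < j then g i j else 0) + (if j < i then g i j else 0) :=
    fun i j => by rcases lt_trichotomy i j with h | rfl | h <;> simp [*, not_lt_of_gt]
  rw [sum_add_distrib, ← hswap, sum_filter, sum_filter, ← sum_add_distrib, Fintype.sum_prod_type]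
  exact sum_congr rfl fun i _ => sum_congr rfl fun j _ => hsplit i j

lemma univ_map_castSuccEmb (n : ℕ) : univ.map Fin.castSuccEmb = univ.erase (Fin.last n) := by
  ext i
  simp [Fin.exists_castSucc_eq]

lemma aOS_eq_edgeSum : aOS n = edgeSum (univ.erase (Fin.last n)) := by
  simp only [edgeSum, ← univ_map_castSuccEmb, sum_map, Fin.coe_castSuccEmb]
  rw [sum_sum_eq_sum_filter_lt (fun i j : Fin n => eOS n i.castSucc j.castSucc)
    fun i => eOS_self _, aOS, smul_sum]
  refine sum_congr rfl fun p _ => ?_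
  rw [eOS_comm p.2.castSucc p.1.castSucc]; module

lemma mOS_eq_starSum : mOS n = starSum (univ.erase (Fin.last n)) (Fin.last n) := by
  simp [starSum, ← univ_map_castSuccEmb, mOS]

lemma cOS_eq_hookSum : cOS n = hookSum (univ.erase (Fin.last n)) (Fin.last n) := by
  simp only [hookSum, ← univ_map_castSuccEmb, sum_map, Fin.coe_castSuccEmb]
  rw [sum_sum_eq_sum_filter_lt
    (fun i j : Fin n => eOS n i.castSucc j.castSucc * eOS n i.castSucc (Fin.last n))
    fun i => by rw [eOS_self, zero_mul], cOS]
  refine sum_congr rfl fun p _ => ?_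
  rw [eOS_comm p.2.castSucc p.1.castSucc]

lemma OSinv_eq_invariants : OSinv n = invariants univ (univ.erase (Fin.last n)) := by
  ext z
  rw [mem_invariants, supported_univ, mem_fixedBy]
  simp [OSinv, ← SetLike.mem_coe, OSperm_eq_map]

lemma span_candidateBasis_eq_OSinv (hn : n ≠ 0) :
    Submodule.span ℚ (candidateBasis n (aOS n) (mOS n) (cOS n)) =
      Subalgebra.toSubmodule (OSinv n) := by
  have := span_candidateBasis (S := univ.erase (Fin.last n)) (r := Fin.last n)
    (card_pos.mp (by simpa [Nat.pos_iff_ne_zero])) (notMem_erase _ _)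
  rwa [insert_erase (mem_univ _), card_erase_of_mem (mem_univ _), card_univ, Fintype.card_fin,
    Nat.add_sub_cancel, ← OSinv_eq_invariants, ← aOS_eq_edgeSum, ← mOS_eq_starSum,
    ← cOS_eq_hookSum] at this

lemma finrank_OSinv (hn : n ≠ 0) : Module.finrank ℚ (OSinv n) = 2 * n := by
  have := finrank_invariants (S := univ.erase (Fin.last n)) (r := Fin.last n)
    (card_pos.mp (by simpa [Nat.pos_iff_ne_zero])) (notMem_erase _ _)
  rwa [insert_erase (mem_univ _), card_erase_of_mem (mem_univ _), card_univ, Fintype.card_fin,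
    Nat.add_sub_cancel, ← OSinv_eq_invariants] at this

lemma linearIndependent_of_ncard_le_finrank_span {K V : Type*} [DivisionRing K] [AddCommGroup V]
    [Module K V] {B : Set V} (hB : B.Finite)
    (h : B.ncard ≤ Module.finrank K (Submodule.span K B)) :
    LinearIndependent K ((↑) : B → V) := by
  have := hB.fintype
  rwa [linearIndependent_iff_card_le_finrank_span, Subtype.range_coe, ← Nat.card_eq_fintype_card,
    Nat.card_coe_set_eq]

end Translation

end OS

/-- For every integer `n ≥ 2`, the set
`B = {aᵉ mᵈ cᵈ : ε, δ ∈ {0,1}, 0 ≤ d < p}` (for `n` even), respectively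
`B = {aᵉ mᵈ cᵈ : ε, δ ∈ {0,1}, 0 ≤ d < p−1} ∪ {c^{p−1}, a c^{p−1} + m c^{p−1}}` (for `n` odd),
with `p = ⌊(n+1)/2⌋`, consists of `S_n`-invariant elements and is a basis of `OS_n^{S_n}` as a
`ℚ`-vector space. -/
theorem OSinv_linear_basis (n : ℕ) (hn : 2 ≤ n) (B : Set (OS n))
    (hB : B = if Even n then
      {x | ∃ ε ∈ ({0,1} : Set ℕ), ∃ δ ∈ ({0,1} : Set ℕ), ∃ d < (n+1)/2,
        x = aOS n ^ ε * mOS n ^ δ * cOS n ^ d}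
      else
      {x | ∃ ε ∈ ({0,1} : Set ℕ), ∃ δ ∈ ({0,1} : Set ℕ), ∃ d < (n+1)/2 - 1,
        x = aOS n ^ ε * mOS n ^ δ * cOS n ^ d} ∪
      {cOS n ^ ((n+1)/2 - 1),
        aOS n * cOS n ^ ((n+1)/2 - 1) + mOS n * cOS n ^ ((n+1)/2 - 1)}) :
    B ⊆ (OSinv n : Set (OS n)) ∧
    LinearIndependent ℚ ((↑) : B → OS n) ∧
    Submodule.span ℚ B = Subalgebra.toSubmodule (OSinv n) := by
  have hn0 : n ≠ 0 := by lia
  replace hB : B = OS.candidateBasis n (aOS n) (mOS n) (cOS n) := hB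
  have hspan : Submodule.span ℚ B = Subalgebra.toSubmodule (OSinv n) :=
    hB ▸ OS.span_candidateBasis_eq_OSinv hn0
  have hfin : B.Finite := hB ▸ OS.finite_candidateBasis ..
  have hcard : B.ncard ≤ Module.finrank ℚ (Submodule.span ℚ B) := by
    rw [hspan, Subalgebra.finrank_toSubmodule, OS.finrank_OSinv hn0, hB]
    exact OS.ncard_candidateBasis_le ..
  exact ⟨Submodule.span_le.mp hspan.le, OS.linearIndependent_of_ncard_le_finrank_span hfin hcard,
    hspan⟩

end
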